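/- Let f ∈ C²(S¹×ℝ×ℝ, ℝ). If e is an equilibrium of the equation u_t = u_xx + f(x,u,u_x) and γ is a classical periodic solution of minimal period p > 0 with γ(·,t) ≠ e for every t, then the zero number z(e − γ(·,t)) is the same for all t ∈ ℝ, and for every t the function x ↦ e(x) − γ(x,t) has no multiple zero. The same conclusions hold for the difference of two distinct equilibria and for the difference γ₁(·,t) − γ₂(·,t) of two classical periodic solutions satisfying γ₁(·,t) ≠ γ₂(·,t) for all t. -/

import Mathlib

open Set

/-- Zero number (number of strict sign changes) of a `1`-periodic function on `ℝ`,
viewed as a function on the circle `S¹ = ℝ/ℤ`. -/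
noncomputable def zeroNumber (φ : ℝ → ℝ) : ℕ∞ :=
  ⨆ k ∈ {k : ℕ | ∃ x : Fin k → ℝ, StrictMono x ∧ (∀ i j : Fin k, x j < x i + 1) ∧
      ∀ i : Fin k, φ (x i) * φ (x (finRotate k i)) < 0}, (k : ℕ∞)

/-- A multiple zero of a (C¹) function `φ : ℝ → ℝ`. -/
def HasMultipleZero (φ : ℝ → ℝ) : Prop := ∃ x, φ x = 0 ∧ deriv φ x = 0

/-- An equilibrium of `u_t = u_xx + f(x,u,u_x)` on the circle: a `1`-periodic `C²`
function `e` with `e'' + f(x,e,e') = 0`. -/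
def IsEquilibrium (f : ℝ → ℝ → ℝ → ℝ) (e : ℝ → ℝ) : Prop :=
  Function.Periodic e 1 ∧ ContDiff ℝ 2 e ∧
    ∀ x, deriv (deriv e) x + f x (e x) (deriv e x) = 0

/-- A classical solution `γ` (written `γ t x` for `γ(x,t)`) on `S¹ × ℝ` of
`u_t = u_xx + f(x,u,u_x)`. -/
def IsClassicalSolution (f : ℝ → ℝ → ℝ → ℝ) (γ : ℝ → ℝ → ℝ) : Prop :=
  (∀ t, Function.Periodic (γ t) 1)
  ∧ Continuous (fun p : ℝ × ℝ => γ p.1 p.2)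
  ∧ (∀ t x : ℝ, DifferentiableAt ℝ (fun s => γ s x) t)
  ∧ (∀ t, Differentiable ℝ (γ t))
  ∧ (∀ t, Differentiable ℝ (deriv (γ t)))
  ∧ Continuous (fun p : ℝ × ℝ => deriv (fun s => γ s p.2) p.1)
  ∧ Continuous (fun p : ℝ × ℝ => deriv (γ p.1) p.2)
  ∧ Continuous (fun p : ℝ × ℝ => deriv (deriv (γ p.1)) p.2)
  ∧ ∀ t x : ℝ, deriv (fun s => γ s x) t
      = deriv (deriv (γ t)) x + f x (γ t x) (deriv (γ t) x)

/-- A classical periodic solution of minimal period `p > 0`. -/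
def IsPeriodicSolution (f : ℝ → ℝ → ℝ → ℝ) (γ : ℝ → ℝ → ℝ) (p : ℝ) : Prop :=
  IsClassicalSolution f γ ∧ 0 < p ∧ (∀ t, γ (t + p) = γ t) ∧
    ∀ q, 0 < q → (∀ t, γ (t + q) = γ t) → p ≤ q

section


/-- A bounded, `1`-periodic (in space) classical solution of a linear differential inequality
`|v_t - v_xx| ≤ C (|v| + |v_x|)`. -/
structure ZSol (v vt vx vxx : ℝ → ℝ → ℝ) (B C : ℝ) : Prop where
  hx : ∀ t x, HasDerivAt (v t) (vx t x) x
  hxx : ∀ t x, HasDerivAt (vx t) (vxx t x) x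
  ht : ∀ t x, HasDerivAt (fun s => v s x) (vt t x) t
  per : ∀ t x, v t (x + 1) = v t x
  cv : Continuous (fun p : ℝ × ℝ => v p.1 p.2)
  cvt : Continuous (fun p : ℝ × ℝ => vt p.1 p.2)
  cvx : Continuous (fun p : ℝ × ℝ => vx p.1 p.2)
  cvxx : Continuous (fun p : ℝ × ℝ => vxx p.1 p.2)
  bv : ∀ t x, |v t x| ≤ B
  bvt : ∀ t x, |vt t x| ≤ B
  bvx : ∀ t x, |vx t x| ≤ B
  bvxx : ∀ t x, |vxx t x| ≤ B
  hC : 0 ≤ C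
  eqn : ∀ t x, |vt t x - vxx t x| ≤ C * (|v t x| + |vx t x|)

/-- cyclic gaps -/
noncomputable def zgap {n : ℕ} (x : Fin (n + 1) → ℝ) (j : Fin (n + 1)) : ℝ :=
  x (j + 1) - x j + if j = Fin.last n then 1 else 0

lemma zgap_castSucc {n : ℕ} (x : Fin (n + 1) → ℝ) (j : Fin n) :
    zgap x j.castSucc = x j.succ - x j.castSucc := by
  simp [zgap, Fin.coeSucc_eq_succ, (Fin.castSucc_lt_last j).ne]

lemma zgap_last {n : ℕ} (x : Fin (n + 1) → ℝ) :
    zgap x (Fin.last n) = x 0 + 1 - x (Fin.last n) := by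
  simp [zgap, Fin.last_add_one]; ring

lemma zgap_nonneg_iff {n : ℕ} (x : Fin (n + 1) → ℝ) :
    (∀ j, 0 ≤ zgap x j) ↔ Monotone x ∧ x (Fin.last n) ≤ x 0 + 1 := by
  rw [Fin.forall_fin_succ', Fin.monotone_iff_le_succ, zgap_last]
  simp [zgap_castSucc]

lemma zgap_pos_iff {n : ℕ} (x : Fin (n + 1) → ℝ) :
    (∀ j, 0 < zgap x j) ↔ StrictMono x ∧ x (Fin.last n) < x 0 + 1 := by
  rw [Fin.forall_fin_succ', Fin.strictMono_iff_lt_succ, zgap_last]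
  simp [zgap_castSucc]

lemma zgap_shift {n : ℕ} (x : Fin (n + 1) → ℝ) (c : ℝ) (j) :
    zgap (fun i => x i + c) j = zgap x j := by
  simp [zgap]

lemma zgap_sum {n : ℕ} (x : Fin (n + 1) → ℝ) : ∑ j, zgap x j = 1 := by
  have h : ∑ j : Fin (n + 1), x (j + 1) = ∑ j, x j :=
    Equiv.sum_comp (Equiv.addRight (1 : Fin (n + 1))) x
  simp only [zgap, Finset.sum_add_distrib, Finset.sum_sub_distrib, h]
  simp

lemma zgap_continuous {n : ℕ} (j : Fin (n + 1)) :
    Continuous (fun x : Fin (n + 1) → ℝ => zgap x j) := by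
  unfold zgap; fun_prop

/-- second derivative test -/
lemma second_deriv_test {φ φ1 : ℝ → ℝ} {φ2 r0 : ℝ}
    (h1 : ∀ᶠ r in nhds r0, HasDerivAt φ (φ1 r) r) (h2 : HasDerivAt φ1 φ2 r0)
    (hmax : IsLocalMax φ r0) : φ1 r0 = 0 ∧ φ2 ≤ 0 := by
  have h10 := h1.self_of_nhds
  have hz : φ1 r0 = 0 := hmax.hasDerivAt_eq_zero h10
  refine ⟨hz, ?_⟩
  by_contra hpos
  push Not at hpos
  have hd : deriv φ =ᶠ[nhds r0] φ1 := h1.mono fun r hr => hr.deriv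
  have hdd : deriv (deriv φ) r0 = φ2 := by
    rw [hd.deriv_eq]; exact h2.deriv
  have hmin : IsLocalMin φ r0 := isLocalMin_of_deriv_deriv_pos (by rw [hdd]; exact hpos)
    (by rw [h10.deriv, hz]) h10.continuousAt
  have hconst : φ =ᶠ[nhds r0] fun _ => φ r0 := by
    filter_upwards [hmax, hmin] with r ha hb
    exact le_antisymm ha hb
  have : deriv φ =ᶠ[nhds r0] fun _ => 0 := by
    have := hconst.deriv
    simpa using this
  have h0 : deriv (deriv φ) r0 = 0 := by rw [this.deriv_eq]; simp
  linarith

/-- one-sided first derivative test -/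
lemma left_deriv_test {F : ℝ → ℝ} {F' a b : ℝ} (hab : a < b) (h : HasDerivAt F F' b)
    (hmax : ∀ r ∈ Icc a b, F r ≤ F b) : 0 ≤ F' := by
  have hsub : Iio b ⊆ {b}ᶜ := fun y hy => ne_of_lt hy
  have h2 := (hasDerivAt_iff_tendsto_slope.1 h).mono_left (nhdsWithin_mono b hsub)
  refine ge_of_tendsto h2 ?_
  filter_upwards [Ioo_mem_nhdsLT hab] with r hr
  rw [slope_def_field]
  exact div_nonneg_of_nonpos (by linarith [hmax r ⟨hr.1.le, hr.2.le⟩]) (by linarith [hr.2])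

lemma zsol_per_int {v vt vx vxx : ℝ → ℝ → ℝ} {B C : ℝ} (S : ZSol v vt vx vxx B C)
    (t x : ℝ) (m : ℤ) : v t (x + m) = v t x := by
  have : Function.Periodic (v t) 1 := fun x => S.per t x
  simpa using this.int_mul m x

lemma max_principle {v vt vx vxx : ℝ → ℝ → ℝ} {B C : ℝ} (S : ZSol v vt vx vxx B C)
    {n : ℕ} (σ : Fin (n + 1) → ℝ) (hσ : ∀ i, |σ i| = 1)
    (halt : ∀ i, σ i * σ (i + 1) < 0)
    (Ψ : (Fin (n + 1) → ℝ) → ℝ) (Ψ1 Ψ2 : Fin (n + 1) → (Fin (n + 1) → ℝ) → ℝ) (Λ : ℝ)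
    (hΨc : ContinuousOn Ψ {x | ∀ j, 0 ≤ zgap x j})
    (hΨp : ∀ x, (∀ j, 0 ≤ zgap x j) → 0 < Ψ x)
    (hΨs : ∀ x c, Ψ (fun i => x i + c) = Ψ x)
    (hΨ1 : ∀ x i, (∀ j, 0 < zgap x j) →
      HasDerivAt (fun r => Ψ (Function.update x i r)) (Ψ1 i x) (x i))
    (hΨ2 : ∀ x i, (∀ j, 0 < zgap x j) →
      HasDerivAt (fun r => Ψ1 i (Function.update x i r)) (Ψ2 i x) (x i))
    (hsup : ∀ x, (∀ j, 0 < zgap x j) →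
      ∑ i, (Ψ2 i x + C * |Ψ1 i x| + C * Ψ x) < Λ * Ψ x)
    {t t' : ℝ} (htt : t ≤ t') (x' : Fin (n + 1) → ℝ) (hx' : ∀ j, 0 ≤ zgap x' j)
    (hpos' : ∀ i, 0 < σ i * v t' (x' i)) :
    ∃ x : Fin (n + 1) → ℝ, (∀ j, 0 < zgap x j) ∧ (∀ i, 0 < σ i * v t (x i)) ∧
      (∏ i, σ i * v t' (x' i)) / Ψ x' * Real.exp (-Λ * (t' - t)) ≤
        (∏ i, σ i * v t (x i)) / Ψ x := by
  classical
  -- the functional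
  set Φ : (Fin (n + 1) → ℝ) × ℝ → ℝ := fun p =>
    Real.exp (-Λ * p.2) * ((∏ i, max (σ i * v p.2 (p.1 i)) 0) / Ψ p.1) with hΦ
  set D : Set (Fin (n + 1) → ℝ) := {x | ∀ j, 0 ≤ zgap x j} with hD
  set K : Set (Fin (n + 1) → ℝ) := D ∩ (Set.univ.pi fun _ => Icc (-1) 3) with hK
  have hDcl : IsClosed D := by
    have : D = ⋂ j, {x | 0 ≤ zgap x j} := by ext; simp [hD]
    rw [this]
    exact isClosed_iInter fun j => isClosed_le continuous_const (zgap_continuous j)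
  have hKc : IsCompact K :=
    (isCompact_univ_pi fun _ => isCompact_Icc).inter_left hDcl
  have hΦshift : ∀ x s (m : ℤ), Φ (fun i => x i + m, s) = Φ (x, s) := by
    intro x s m
    simp only [hΦ, hΨs, zsol_per_int S]
  have hred : ∀ x ∈ D, ∃ y ∈ K, ∀ s, Φ (y, s) = Φ (x, s) := by
    intro x hx
    refine ⟨fun i => x i + (-⌊x 0⌋ : ℤ), ⟨?_, ?_⟩, fun s => hΦshift x s _⟩
    · intro j; rw [zgap_shift]; exact hx j
    · have hm := (zgap_nonneg_iff x).1 hx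
      intro i _
      have h1 := hm.1 (Fin.zero_le i)
      have h2 := hm.1 (Fin.le_last i)
      have h3 := Int.floor_le (x 0)
      have h4 := Int.lt_floor_add_one (x 0)
      constructor <;> push_cast <;> linarith [hm.2]
  have hΦc : ContinuousOn Φ (K ×ˢ Icc t t') := by
    have hvc : ∀ i : Fin (n + 1), Continuous
        (fun p : (Fin (n + 1) → ℝ) × ℝ => v p.2 (p.1 i)) := fun i =>
      S.cv.comp (by fun_prop : Continuous fun p : (Fin (n + 1) → ℝ) × ℝ => (p.2, p.1 i))
    refine ContinuousOn.mul (Continuous.continuousOn (by fun_prop)) (ContinuousOn.div ?_ ?_ ?_)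
    · refine Continuous.continuousOn (continuous_finsetProd _ fun i _ => ?_)
      exact (continuous_const.mul (hvc i)).max continuous_const
    · exact hΨc.comp continuousOn_fst (fun p hp => hp.1.1)
    · exact fun p hp => (hΨp _ hp.1.1).ne'
  obtain ⟨y', hy'K, hy'⟩ := hred x' hx'
  obtain ⟨⟨xs, s⟩, ⟨hxsK, hs⟩, hmax⟩ := (hKc.prod isCompact_Icc).exists_isMaxOn
    ⟨(y', t'), hy'K, right_mem_Icc.2 htt⟩ hΦc
  have hmax' : ∀ x ∈ D, ∀ r ∈ Icc t t', Φ (x, r) ≤ Φ (xs, s) := by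
    intro x hx r hr
    obtain ⟨y, hyK, hy⟩ := hred x hx
    rw [← hy r]
    exact hmax (show (y, r) ∈ K ×ˢ Icc t t' from ⟨hyK, hr⟩)
  have hΦ' : Φ (x', t') = Real.exp (-Λ * t') * ((∏ i, σ i * v t' (x' i)) / Ψ x') := by
    simp only [hΦ]
    congr 2
    exact Finset.prod_congr rfl fun i _ => max_eq_left (hpos' i).le
  have hΦpos : 0 < Φ (xs, s) := by
    refine lt_of_lt_of_le ?_ (hmax' x' hx' t' (right_mem_Icc.2 htt))
    rw [hΦ']
    exact mul_pos (Real.exp_pos _) (div_pos (Finset.prod_pos fun i _ => hpos' i) (hΨp _ hx'))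
  have hsv : ∀ i, 0 < σ i * v s (xs i) := by
    intro i
    by_contra hcon
    push Not at hcon
    have : ∏ i, max (σ i * v s (xs i)) 0 = 0 :=
      Finset.prod_eq_zero (Finset.mem_univ i) (max_eq_right hcon)
    simp only [hΦ, this] at hΦpos
    simp at hΦpos
  have hxsD : xs ∈ D := hxsK.1
  have hgap : ∀ j, 0 < zgap xs j := by
    intro j
    refine lt_of_le_of_ne (hxsD j) ?_
    intro h0
    have hv : v s (xs (j + 1)) = v s (xs j) := by
      unfold zgap at h0
      split_ifs at h0 with hj
      · rw [← S.per s (xs (j + 1))]; congr 1; linarith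
      · congr 1; linarith
    have h1 := hsv j
    have h2 := hsv (j + 1)
    rw [hv] at h2
    nlinarith [mul_pos h1 h2, halt j, mul_self_nonneg (v s (xs j)), mul_pos_iff.1 h1]
  set P : ℝ := ∏ i, σ i * v s (xs i) with hP
  have hPpos : 0 < P := Finset.prod_pos fun i _ => hsv i
  have hΨxs : 0 < Ψ xs := hΨp _ hxsD
  have hΦs : Φ (xs, s) = Real.exp (-Λ * s) * (P / Ψ xs) := by
    simp only [hΦ, hP]
    congr 2
    exact Finset.prod_congr rfl fun i _ => max_eq_left (hsv i).le
  -- it suffices that the maximum is attained at the initial time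
  have hst : s = t := by
    by_contra hne
    have hlt : t < s := lt_of_le_of_ne hs.1 (Ne.symm hne)
    -- time derivative
    set A : Fin (n + 1) → ℝ := fun i => ∏ j ∈ Finset.univ.erase i, σ j * v s (xs j) with hA
    have hAP : ∀ i, A i * (σ i * v s (xs i)) = P := fun i =>
      Finset.prod_erase_mul _ _ (Finset.mem_univ i)
    have hApos : ∀ i, 0 < A i := fun i => Finset.prod_pos fun j _ => hsv j
    have hder : HasDerivAt (fun r => ∏ i, σ i * v r (xs i))
        (∑ i, A i * (σ i * vt s (xs i))) s := by
      have := HasDerivAt.fun_finsetProd (u := Finset.univ) (x := s)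
        (f := fun i r => σ i * v r (xs i)) (f' := fun i => σ i * vt s (xs i))
        (fun i _ => (S.ht s (xs i)).const_mul (σ i))
      simpa [hA] using this
    have hexp : HasDerivAt (fun r => Real.exp (-Λ * r)) (Real.exp (-Λ * s) * (-Λ)) s := by
      have := ((hasDerivAt_id s).const_mul (-Λ)).exp
      simpa using this
    have hF := hexp.mul (hder.div_const (Ψ xs))
    -- local positivity for r near s
    have hle : ∀ r ∈ Icc t s, Real.exp (-Λ * r) * ((∏ i, max (σ i * v r (xs i)) 0) / Ψ xs)
        ≤ Real.exp (-Λ * s) * (P / Ψ xs) := by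
      intro r hr
      have := hmax' xs hxsD r ⟨hr.1, hr.2.trans hs.2⟩
      rw [hΦs] at this
      exact this
    have hev : ∀ᶠ r in nhds s, ∀ i, 0 < σ i * v r (xs i) := by
      rw [Filter.eventually_all]
      intro i
      have hc : ContinuousAt (fun r => σ i * v r (xs i)) s :=
        ((S.ht s (xs i)).const_mul (σ i)).continuousAt
      exact hc.eventually (lt_mem_nhds (hsv i))
    obtain ⟨δ, hδ, hδs⟩ := Metric.eventually_nhds_iff.1 hev
    have h0 := left_deriv_test (a := max t (s - δ / 2)) (b := s)
      (max_lt hlt (by linarith)) hF (by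
        intro r hr
        have hr1 : t ≤ r := (le_max_left _ _).trans hr.1
        have hr2 : s - δ / 2 ≤ r := (le_max_right _ _).trans hr.1
        have := hle r ⟨hr1, hr.2⟩
        have hpr : ∀ i, 0 < σ i * v r (xs i) := hδs (by
          rw [Real.dist_eq, abs_lt]; constructor <;> linarith [hr.2])
        rw [Finset.prod_congr rfl (fun i _ => max_eq_left (hpr i).le)] at this
        exact this)
    -- space derivatives
    have hspace : ∀ i, A i * (σ i * vx s (xs i)) = P / Ψ xs * Ψ1 i xs ∧
        A i * (σ i * vxx s (xs i)) ≤ P / Ψ xs * Ψ2 i xs := by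
      intro i
      have hupd : Filter.Tendsto (fun r => Function.update xs i r) (nhds (xs i)) (nhds xs) := by
        have : Continuous (fun r => Function.update xs i r) := by fun_prop
        have := this.tendsto (xs i)
        rwa [Function.update_eq_self] at this
      have hgev : ∀ᶠ r in nhds (xs i), ∀ j, 0 < zgap (Function.update xs i r) j := by
        rw [Filter.eventually_all]
        intro j
        exact hupd.eventually ((zgap_continuous j).continuousAt.eventually
          (lt_mem_nhds (hgap j)))
      have hvev : ∀ᶠ r in nhds (xs i), 0 < σ i * v s r :=
        ((S.hx s (xs i)).const_mul (σ i)).continuousAt.eventually (lt_mem_nhds (hsv i))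
      have h1 : ∀ᶠ r in nhds (xs i), HasDerivAt
          (fun r => A i * (σ i * v s r) - P / Ψ xs * Ψ (Function.update xs i r))
          (A i * (σ i * vx s r) - P / Ψ xs * Ψ1 i (Function.update xs i r)) r := by
        filter_upwards [hgev] with r hr
        have ha := hΨ1 (Function.update xs i r) i hr
        simp only [Function.update_idem, Function.update_self] at ha
        exact (((S.hx s r).const_mul _).const_mul _).sub (ha.const_mul _)
      have h2 : HasDerivAt
          (fun r => A i * (σ i * vx s r) - P / Ψ xs * Ψ1 i (Function.update xs i r))
          (A i * (σ i * vxx s (xs i)) - P / Ψ xs * Ψ2 i xs) (xs i) :=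
        (((S.hxx s (xs i)).const_mul _).const_mul _).sub ((hΨ2 xs i hgap).const_mul _)
      have hmx : IsLocalMax
          (fun r => A i * (σ i * v s r) - P / Ψ xs * Ψ (Function.update xs i r)) (xs i) := by
        have hval : A i * (σ i * v s (xs i)) - P / Ψ xs * Ψ (Function.update xs i (xs i)) = 0 := by
          rw [hAP, Function.update_eq_self]; field_simp; ring
        filter_upwards [hgev, hvev] with r hr hvr
        show _ ≤ A i * (σ i * v s (xs i)) - P / Ψ xs * Ψ (Function.update xs i (xs i))
        rw [hval]
        have hrD : Function.update xs i r ∈ D := fun j => (hr j).le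
        have := hmax' _ hrD s hs
        rw [hΦs] at this
        have hprod : ∏ j, max (σ j * v s (Function.update xs i r j)) 0 = A i * (σ i * v s r) := by
          rw [← Finset.prod_erase_mul _ _ (Finset.mem_univ i)]
          congr 1
          · refine Finset.prod_congr rfl fun j hj => ?_
            rw [Function.update_of_ne (Finset.ne_of_mem_erase hj)]
            exact max_eq_left (hsv j).le
          · rw [Function.update_self]; exact max_eq_left hvr.le
        simp only [hΦ, hprod] at this
        have := le_of_mul_le_mul_left this (Real.exp_pos _)
        rw [div_le_iff₀ (hΨp _ hrD)] at this
        linarith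
      obtain ⟨e1, e2⟩ := second_deriv_test h1 h2 hmx
      rw [Function.update_eq_self] at e1
      constructor <;> linarith
    -- combine
    have hbound : ∀ i, A i * (σ i * vt s (xs i)) ≤
        P / Ψ xs * (Ψ2 i xs + C * |Ψ1 i xs| + C * Ψ xs) := by
      intro i
      obtain ⟨e1, e2⟩ := hspace i
      have he := S.eqn s (xs i)
      have h3 : σ i * (vt s (xs i) - vxx s (xs i)) ≤ C * (|v s (xs i)| + |vx s (xs i)|) := by
        refine (le_abs_self _).trans ?_
        rw [abs_mul, hσ i, one_mul]; exact he
      have h4 : A i * |v s (xs i)| = P := by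
        rw [← hAP i, ← abs_of_pos (hsv i), abs_mul, hσ i, one_mul]
      have h5 : A i * |vx s (xs i)| = P / Ψ xs * |Ψ1 i xs| := by
        have := congrArg abs e1
        rw [abs_mul, abs_mul, abs_mul, hσ i, one_mul, abs_of_pos (hApos i),
          abs_of_pos (div_pos hPpos hΨxs)] at this
        exact this
      have h6 := mul_le_mul_of_nonneg_left h3 (hApos i).le
      have h7 : P / Ψ xs * Ψ xs = P := by field_simp
      have h8 : A i * (C * (|v s (xs i)| + |vx s (xs i)|)) =
          C * P + C * (P / Ψ xs * |Ψ1 i xs|) := by rw [← h5, ← h4]; ring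
      have h9 : P / Ψ xs * (Ψ2 i xs + C * |Ψ1 i xs| + C * Ψ xs) =
          P / Ψ xs * Ψ2 i xs + C * (P / Ψ xs * |Ψ1 i xs|) + C * (P / Ψ xs * Ψ xs) := by ring
      rw [h9, h7]
      nlinarith
    have hsum : ∑ i, A i * (σ i * vt s (xs i)) < Λ * P := by
      calc _ ≤ ∑ i, P / Ψ xs * (Ψ2 i xs + C * |Ψ1 i xs| + C * Ψ xs) :=
            Finset.sum_le_sum fun i _ => hbound i
        _ = P / Ψ xs * ∑ i, (Ψ2 i xs + C * |Ψ1 i xs| + C * Ψ xs) := by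
            rw [Finset.mul_sum]
        _ < P / Ψ xs * (Λ * Ψ xs) :=
            mul_lt_mul_of_pos_left (hsup xs hgap) (div_pos hPpos hΨxs)
        _ = Λ * P := by field_simp
    have hfin : Real.exp (-Λ * s) * (-Λ) * (P / Ψ xs) +
        Real.exp (-Λ * s) * ((∑ i, A i * (σ i * vt s (xs i))) / Ψ xs) =
        Real.exp (-Λ * s) / Ψ xs * (∑ i, A i * (σ i * vt s (xs i)) - Λ * P) := by
      field_simp; ring
    have h0' : 0 ≤ Real.exp (-Λ * s) * (-Λ) * (P / Ψ xs) +
        Real.exp (-Λ * s) * ((∑ i, A i * (σ i * vt s (xs i))) / Ψ xs) := h0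
    rw [hfin] at h0'
    have := mul_neg_of_pos_of_neg (div_pos (Real.exp_pos (-Λ * s)) hΨxs) (sub_neg.2 hsum)
    linarith
  subst hst
  refine ⟨xs, hgap, hsv, ?_⟩
  have := hmax' x' hx' t' (right_mem_Icc.2 htt)
  rw [hΦ', hΦs] at this
  have he : Real.exp (-Λ * (t' - s)) = Real.exp (-Λ * t') * (Real.exp (-Λ * s))⁻¹ := by
    rw [← Real.exp_neg, ← Real.exp_add]; congr 1; ring
  rw [he]
  calc _ = (Real.exp (-Λ * t') * ((∏ i, σ i * v t' (x' i)) / Ψ x')) * (Real.exp (-Λ * s))⁻¹ := by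
        ring
    _ ≤ (Real.exp (-Λ * s) * (P / Ψ xs)) * (Real.exp (-Λ * s))⁻¹ :=
        mul_le_mul_of_nonneg_right this (inv_nonneg.2 (Real.exp_pos _).le)
    _ = _ := by rw [← hP]; field_simp

end

section


/-- cyclically alternating configuration -/
def ZCyc (φ : ℝ → ℝ) (n : ℕ) (x : Fin (n + 1) → ℝ) : Prop :=
  (∀ j, 0 < zgap x j) ∧ ∀ i, φ (x i) * φ (x (i + 1)) < 0

lemma zn_le {φ : ℝ → ℝ} {n : ℕ} {x : Fin (n + 1) → ℝ} (h : ZCyc φ n x) :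
    ((n + 1 : ℕ) : ℕ∞) ≤ zeroNumber φ := by
  unfold zeroNumber
  refine le_iSup₂_of_le (n + 1) ?_ le_rfl
  obtain ⟨h1, h2⟩ := (zgap_pos_iff x).1 h.1
  refine ⟨x, h1, fun i j => ?_, fun i => ?_⟩
  · have := h1.monotone (Fin.le_last j)
    have := h1.monotone (Fin.zero_le i)
    linarith
  · rw [finRotate_apply]; exact h.2 i

lemma zn_bound {φ : ℝ → ℝ} {b : ℕ∞}
    (h : ∀ n x, ZCyc φ n x → ((n + 1 : ℕ) : ℕ∞) ≤ b) : zeroNumber φ ≤ b := by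
  unfold zeroNumber
  refine iSup₂_le fun k hk => ?_
  rcases k with _ | n
  · simp
  obtain ⟨x, h1, h2, h3⟩ := hk
  refine h n x ⟨(zgap_pos_iff x).2 ⟨h1, h2 _ _⟩, fun i => ?_⟩
  have := h3 i
  rwa [finRotate_apply] at this

lemma zcyc_sign {φ : ℝ → ℝ} {n : ℕ} {x : Fin (n + 1) → ℝ} (h : ZCyc φ n x) :
    ∃ σ : Fin (n + 1) → ℝ, (∀ i, |σ i| = 1) ∧ (∀ i, σ i * σ (i + 1) < 0) ∧
      ∀ i, 0 < σ i * φ (x i) := by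
  have hne : ∀ i, φ (x i) ≠ 0 := fun i h0 => by have := h.2 i; simp [h0] at this
  refine ⟨fun i => SignType.sign (φ (x i)), fun i => ?_, fun i => ?_, fun i => ?_⟩
  · rcases lt_or_gt_of_ne (hne i) with h0 | h0 <;> simp [h0]
  · rcases mul_neg_iff.1 (h.2 i) with h0 | h0 <;> simp [h0.1, h0.2]
  · rcases lt_or_gt_of_ne (hne i) with h0 | h0 <;> simp [h0]

lemma zcyc_of_sign {φ : ℝ → ℝ} {n : ℕ} {x : Fin (n + 1) → ℝ} (hg : ∀ j, 0 < zgap x j)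
    {σ : Fin (n + 1) → ℝ} (h1 : ∀ i, σ i * σ (i + 1) < 0)
    (h2 : ∀ i, 0 < σ i * φ (x i)) : ZCyc φ n x := by
  refine ⟨hg, fun i => ?_⟩
  have h3 := mul_pos (h2 i) (h2 (i + 1))
  have h4 : (σ i * σ (i + 1)) * (φ (x i) * φ (x (i + 1))) > 0 := by nlinarith
  by_contra hcon
  push Not at hcon
  nlinarith [h1 i, mul_nonneg (neg_nonneg.2 (h1 i).le) hcon]

lemma zn_mono {v vt vx vxx : ℝ → ℝ → ℝ} {B C : ℝ} (S : ZSol v vt vx vxx B C)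
    {t t' : ℝ} (htt : t ≤ t') : zeroNumber (v t') ≤ zeroNumber (v t) := by
  refine zn_bound fun n x hx => ?_
  obtain ⟨σ, h1, h2, h3⟩ := zcyc_sign hx
  obtain ⟨y, hy1, hy2, -⟩ := max_principle S σ h1 h2 (fun _ => 1) (fun _ _ => 0) (fun _ _ => 0)
    (C * (n + 1) + 1) continuousOn_const (fun _ _ => one_pos) (fun _ _ => rfl)
    (fun _ _ _ => hasDerivAt_const _ _) (fun _ _ _ => hasDerivAt_const _ _)
    (fun _ _ => by simp; nlinarith) htt x (fun j => (hx.1 j).le) h3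
  exact zn_le (zcyc_of_sign hy1 h2 hy2)

/-- derivative of the gaps -/
noncomputable def zeps {n : ℕ} (j i : Fin (n + 1)) : ℝ :=
  (if j + 1 = i then 1 else 0) - (if j = i then 1 else 0)

lemma zgap_update {n : ℕ} (x : Fin (n + 1) → ℝ) (i j : Fin (n + 1)) (r : ℝ) :
    zgap (Function.update x i r) j = zgap x j + zeps j i * (r - x i) := by
  have h : ∀ m, Function.update x i r m = x m + (if m = i then 1 else 0) * (r - x i) := by
    intro m
    by_cases hm : m = i
    · subst hm; simp
    · simp [hm]
  unfold zgap zeps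
  rw [h, h]
  ring

lemma zeps_abs_sum {n : ℕ} (j : Fin (n + 1)) : ∑ i, |zeps j i| ≤ 2 := by
  calc ∑ i, |zeps j i| ≤ ∑ i, ((if j + 1 = i then 1 else 0) + (if j = i then (1 : ℝ) else 0)) := by
        refine Finset.sum_le_sum fun i _ => ?_
        unfold zeps
        split_ifs <;> norm_num
    _ = 2 := by rw [Finset.sum_add_distrib]; simp; norm_num

lemma zeps_sq_sum {n : ℕ} (hn : 1 ≤ n) (j : Fin (n + 1)) : ∑ i, (zeps j i) ^ 2 = 2 := by
  have hj : j + 1 ≠ j := by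
    have : NeZero n := ⟨by omega⟩
    intro h
    have h1 : (1 : Fin (n + 1)) = 0 := by simpa using h
    rw [Fin.one_eq_zero_iff] at h1
    omega
  calc ∑ i, (zeps j i) ^ 2
      = ∑ i, ((if j + 1 = i then 1 else 0) + (if j = i then (1 : ℝ) else 0)) := by
        refine Finset.sum_congr rfl fun i _ => ?_
        unfold zeps
        split_ifs with a b
        · exact absurd (a.trans b.symm) hj
        all_goals norm_num
    _ = 2 := by rw [Finset.sum_add_distrib]; simp; norm_num

lemma cube_tangent {s : ℝ} (hs : 0 < s) : 1 / 8 - 3 * (s - 2) / 16 ≤ 1 / s ^ 3 := by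
  rw [le_div_iff₀ (by positivity)]
  nlinarith [mul_nonneg (sq_nonneg (s - 2)) (by positivity : 0 ≤ 3 * s ^ 2 + 4 * s + 4)]

lemma zn_finite {v vt vx vxx : ℝ → ℝ → ℝ} {B C : ℝ} (S : ZSol v vt vx vxx B C) :
    ∃ N : ℕ, ∀ t, zeroNumber (v t) ≤ N := by
  obtain ⟨N, hN⟩ := exists_nat_ge (8 * C + 5)
  refine ⟨N, fun t' => zn_bound fun n x' hx' => ?_⟩
  by_contra hcon
  have hnN : N < n + 1 := by
    have := not_le.1 hcon
    exact_mod_cast this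
  obtain ⟨σ, h1, h2, h3⟩ := zcyc_sign hx'
  set k : ℝ := (n : ℝ) + 1 with hk
  have hCn := S.hC
  have hkN : 8 * C + 5 ≤ k := hN.trans (by rw [hk]; exact_mod_cast hnN.le)
  have hkpos : 0 < k := by linarith
  have hn1 : 1 ≤ n := by
    have : (4 : ℝ) ≤ n := by rw [hk] at hkN; linarith
    have : 4 ≤ n := by exact_mod_cast this
    omega
  set Ψ : (Fin (n + 1) → ℝ) → ℝ := fun x => 2 - ∑ j, (k * (k * zgap x j + 1))⁻¹ with hΨ
  set Ψ1 : Fin (n + 1) → (Fin (n + 1) → ℝ) → ℝ := fun i x =>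
    ∑ j, zeps j i * ((k * zgap x j + 1) ^ 2)⁻¹ with hΨ1
  set Ψ2 : Fin (n + 1) → (Fin (n + 1) → ℝ) → ℝ := fun i x =>
    -∑ j, 2 * k * (zeps j i) ^ 2 * (1 / (k * zgap x j + 1) ^ 3) with hΨ2
  have hcard : ∑ _j : Fin (n + 1), (1 : ℝ) = k := by simp [hk]
  have hΨ1le : ∀ x, (∀ j, 0 ≤ zgap x j) → 1 ≤ Ψ x := by
    intro x hx
    have : ∑ j, (k * (k * zgap x j + 1))⁻¹ ≤ ∑ _j : Fin (n + 1), k⁻¹ := by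
      refine Finset.sum_le_sum fun j _ => inv_anti₀ hkpos ?_
      nlinarith [mul_nonneg hkpos.le (hx j), mul_nonneg hkpos.le (mul_nonneg hkpos.le (hx j))]
    have h5 : ∑ _j : Fin (n + 1), k⁻¹ = 1 := by
      simp only [Finset.sum_const, Finset.card_univ, Fintype.card_fin, nsmul_eq_mul]
      push_cast
      rw [← hk]; field_simp
    simp only [hΨ]; linarith
  have hΨle2 : ∀ x, (∀ j, 0 ≤ zgap x j) → Ψ x ≤ 2 := by
    intro x hx
    have : 0 ≤ ∑ j, (k * (k * zgap x j + 1))⁻¹ := Finset.sum_nonneg fun j _ => by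
      have := hx j; positivity
    simp only [hΨ]; linarith
  have hspos : ∀ x : Fin (n + 1) → ℝ, (∀ j, 0 < zgap x j) → ∀ j, 1 ≤ k * zgap x j + 1 := by
    intro x hx j
    nlinarith [mul_pos hkpos (hx j)]
  have key := fun (t : ℝ) (htt : t ≤ t') => max_principle S σ h1 h2 Ψ Ψ1 Ψ2 (-1)
    (by
      refine continuousOn_const.sub (continuousOn_finsetSum _ fun j _ => ContinuousOn.inv₀ ?_ ?_)
      · exact (continuous_const.mul ((continuous_const.mul (zgap_continuous j)).add
          continuous_const)).continuousOn
      · intro x hx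
        have := hx j
        positivity)
    (fun x hx => lt_of_lt_of_le one_pos (hΨ1le x hx))
    (fun x c => by simp only [hΨ, zgap_shift])
    (by
      intro x i hx
      simp only [hΨ, hΨ1, zgap_update]
      have hj : ∀ j ∈ (Finset.univ : Finset (Fin (n + 1))), HasDerivAt
          (fun r => (k * (k * (zgap x j + zeps j i * (r - x i)) + 1))⁻¹)
          (-(zeps j i * ((k * zgap x j + 1) ^ 2)⁻¹)) (x i) := by
        intro j _
        have hp := hspos x hx j
        have hd : HasDerivAt (fun r => k * (k * (zgap x j + zeps j i * (r - x i)) + 1))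
            (k * (k * (zeps j i * 1))) (x i) :=
          (((((hasDerivAt_id (x i)).sub_const (x i)).const_mul (zeps j i)).const_add
            (zgap x j)).const_mul k |>.add_const 1).const_mul k
        have := hd.fun_inv (by simp; constructor <;> linarith)
        refine this.congr_deriv ?_
        have hp' : k * zgap x j + 1 ≠ 0 := by linarith
        simp only [sub_self, mul_zero, add_zero]
        field_simp
      have := (HasDerivAt.fun_sum hj).const_sub 2
      refine this.congr_deriv ?_
      rw [Finset.sum_neg_distrib, neg_neg])
    (by
      intro x i hx
      simp only [hΨ2, hΨ1, zgap_update]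
      have hj : ∀ j ∈ (Finset.univ : Finset (Fin (n + 1))), HasDerivAt
          (fun r => zeps j i * ((k * (zgap x j + zeps j i * (r - x i)) + 1) ^ 2)⁻¹)
          (-(2 * k * (zeps j i) ^ 2 * (1 / (k * zgap x j + 1) ^ 3))) (x i) := by
        intro j _
        have hp := hspos x hx j
        have hd : HasDerivAt (fun r => k * (zgap x j + zeps j i * (r - x i)) + 1)
            (k * (zeps j i * 1)) (x i) :=
          ((((hasDerivAt_id (x i)).sub_const (x i)).const_mul (zeps j i)).const_add
            (zgap x j)).const_mul k |>.add_const 1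
        have := ((hd.fun_pow 2).fun_inv (by simp; linarith)).const_mul (zeps j i)
        refine this.congr_deriv ?_
        have hp' : k * zgap x j + 1 ≠ 0 := by linarith
        simp only [sub_self, mul_zero, add_zero]
        push_cast
        field_simp
      have := HasDerivAt.fun_sum hj
      refine this.congr_deriv ?_
      rw [Finset.sum_neg_distrib])
    (by
      intro x hx
      have hx0 : ∀ j, 0 ≤ zgap x j := fun j => (hx j).le
      have hA : ∑ i, Ψ2 i x ≤ -(k ^ 2 / 2) := by
        have e1 : ∑ i, Ψ2 i x = -∑ j, 4 * k * (1 / (k * zgap x j + 1) ^ 3) := by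
          simp only [hΨ2]
          rw [Finset.sum_neg_distrib, Finset.sum_comm]
          congr 1
          refine Finset.sum_congr rfl fun j _ => ?_
          rw [← Finset.sum_mul, ← Finset.mul_sum, zeps_sq_sum hn1]
          ring
        have e2 : ∑ j, 4 * k * (1 / 8 - 3 * ((k * zgap x j + 1) - 2) / 16) = k ^ 2 / 2 := by
          have : ∀ j, 4 * k * (1 / 8 - 3 * ((k * zgap x j + 1) - 2) / 16) =
              (5 * k / 4) * 1 - (3 * k ^ 2 / 4) * zgap x j := fun j => by ring
          simp only [this]
          rw [Finset.sum_sub_distrib, ← Finset.mul_sum, ← Finset.mul_sum, zgap_sum, hcard]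
          ring
        rw [e1, ← e2]
        refine neg_le_neg (Finset.sum_le_sum fun j _ => ?_)
        refine mul_le_mul_of_nonneg_left (cube_tangent ?_) (by positivity)
        linarith [hspos x hx j]
      have hB : ∑ i, |Ψ1 i x| ≤ 2 * k := by
        calc ∑ i, |Ψ1 i x| ≤ ∑ i, ∑ j, |zeps j i| := by
              refine Finset.sum_le_sum fun i _ => ?_
              refine (Finset.abs_sum_le_sum_abs _ _).trans (Finset.sum_le_sum fun j _ => ?_)
              rw [abs_mul]
              have hp := hspos x hx j
              have : |((k * zgap x j + 1) ^ 2)⁻¹| ≤ 1 := by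
                rw [abs_of_nonneg (by positivity)]
                exact inv_le_one_of_one_le₀ (one_le_pow₀ hp)
              exact mul_le_of_le_one_right (abs_nonneg _) this
          _ = ∑ j, ∑ i, |zeps j i| := Finset.sum_comm
          _ ≤ ∑ _j : Fin (n + 1), 2 * (1 : ℝ) :=
              Finset.sum_le_sum fun j _ => by rw [mul_one]; exact zeps_abs_sum j
          _ = 2 * k := by rw [← Finset.mul_sum, hcard]
      have hD : ∑ i : Fin (n + 1), C * Ψ x = C * Ψ x * k := by
        simp [hk]; ring
      rw [Finset.sum_add_distrib, Finset.sum_add_distrib, ← Finset.mul_sum, hD]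
      have g1 := hΨle2 x hx0
      have g2 := hΨ1le x hx0
      have g3 := mul_le_mul_of_nonneg_left hB hCn
      have g4 : C * Ψ x * k ≤ C * 2 * k := by gcongr
      nlinarith)
    htt x' (fun j => (hx'.1 j).le) h3
  have hB0 : 0 ≤ B := (abs_nonneg _).trans (S.bv 0 0)
  set c : ℝ := (∏ i, σ i * v t' (x' i)) / Ψ x' with hc
  have hcpos : 0 < c := div_pos (Finset.prod_pos fun i _ => h3 i)
    (lt_of_lt_of_le one_pos (hΨ1le x' fun j => (hx'.1 j).le))
  set T : ℝ := B ^ (n + 1) / c with hT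
  have hT0 : 0 ≤ T := by positivity
  obtain ⟨x, hx1, hx2, hx3⟩ := key (t' - T) (by linarith)
  have hP : (∏ i, σ i * v (t' - T) (x i)) ≤ B ^ (n + 1) := by
    calc _ ≤ ∏ _i : Fin (n + 1), B := by
          refine Finset.prod_le_prod (fun i _ => (hx2 i).le) fun i _ => ?_
          refine (le_abs_self _).trans ?_
          rw [abs_mul, h1 i, one_mul]; exact S.bv _ _
      _ = _ := by simp
  have hq : (∏ i, σ i * v (t' - T) (x i)) / Ψ x ≤ B ^ (n + 1) :=
    (div_le_self (Finset.prod_pos fun i _ => hx2 i).le (hΨ1le x fun j => (hx1 j).le)).trans hP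
  have he : T + 1 ≤ Real.exp (-(-1) * (t' - (t' - T))) := by
    have := Real.add_one_le_exp T
    convert this using 2
    ring
  have : c * (T + 1) ≤ B ^ (n + 1) :=
    (mul_le_mul_of_nonneg_left he hcpos.le).trans (hx3.trans hq)
  have hcT : c * T = B ^ (n + 1) := by rw [hT]; field_simp
  linarith

end

section


lemma zcyc_iff {φ : ℝ → ℝ} {n : ℕ} {x : Fin (n + 1) → ℝ} :
    ZCyc φ n x ↔ ((∀ i : Fin n, x i.castSucc < x i.succ) ∧ x (Fin.last n) < x 0 + 1) ∧
      (∀ i : Fin n, φ (x i.castSucc) * φ (x i.succ) < 0) ∧ φ (x (Fin.last n)) * φ (x 0) < 0 := by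
  unfold ZCyc
  rw [zgap_pos_iff, Fin.strictMono_iff_lt_succ, Fin.forall_fin_succ' (P := fun i => φ (x i) * φ (x (i + 1)) < 0)]
  simp [Fin.coeSucc_eq_succ, Fin.last_add_one]

lemma zn_attained {φ : ℝ → ℝ} (h : zeroNumber φ ≠ ⊤) :
    zeroNumber φ = 0 ∨ ∃ n x, ZCyc φ n x ∧ zeroNumber φ = ((n + 1 : ℕ) : ℕ∞) := by
  obtain ⟨m, hm⟩ := ENat.ne_top_iff_exists.1 h
  rcases m with _ | n
  · left; rw [← hm]; simp
  right
  by_contra hcon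
  push Not at hcon
  have : zeroNumber φ ≤ (n : ℕ∞) := by
    refine zn_bound fun n' x hx => ?_
    have h1 := zn_le hx
    rw [← hm] at h1
    have h1' : n' + 1 ≤ n + 1 := by exact_mod_cast h1
    have h2 : n' ≠ n := by
      rintro rfl
      exact hcon _ x hx hm.symm
    have : n' + 1 ≤ n := by omega
    exact_mod_cast this
  rw [← hm] at this
  have : n + 1 ≤ n := by exact_mod_cast this
  omega

lemma zcyc_rotate {φ : ℝ → ℝ} (hper : ∀ x, φ (x + 1) = φ x) {n : ℕ} {x : Fin (n + 1) → ℝ}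
    (h : ZCyc φ n x) : ZCyc φ n (fun i => x (i + 1) + if i = Fin.last n then 1 else 0) := by
  have hφ : ∀ i : Fin (n + 1), φ (x (i + 1) + if i = Fin.last n then 1 else 0) = φ (x (i + 1)) := by
    intro i
    split_ifs
    · exact hper _
    · simp
  refine ⟨fun j => ?_, fun i => ?_⟩
  · have := h.1 (j + 1)
    unfold zgap at this ⊢
    linarith
  · simp only [hφ]
    exact h.2 (i + 1)

lemma zcyc_position {φ : ℝ → ℝ} (hper : ∀ x, φ (x + 1) = φ x) {x0 : ℝ} (h0 : φ x0 = 0) {n : ℕ}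
    {x : Fin (n + 1) → ℝ} (h : ZCyc φ n x) :
    ∃ y : Fin (n + 1) → ℝ, ZCyc φ n y ∧ x0 < y 0 ∧ y (Fin.last n) < x0 + 1 := by
  have hne : ∀ y : Fin (n + 1) → ℝ, ZCyc φ n y → ∀ i, y i ≠ x0 := by
    intro y hy i hi
    have := hy.2 i
    rw [hi, h0] at this
    simp at this
  have main : ∀ m : ℕ, ∀ y : Fin (n + 1) → ℝ, ZCyc φ n y → y (Fin.last n) < x0 + 1 →
      x0 < y 0 + 1 → (∀ i : Fin (n + 1), m ≤ i.val → x0 < y i) →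
      ∃ y : Fin (n + 1) → ℝ, ZCyc φ n y ∧ x0 < y 0 ∧ y (Fin.last n) < x0 + 1 := by
    intro m
    induction m with
    | zero => exact fun y hy h1 _ h3 => ⟨y, hy, h3 0 (Nat.zero_le _), h1⟩
    | succ m ih =>
      intro y hy h1 h2 h3
      rcases lt_or_ge x0 (y 0) with hlt | hge
      · exact ⟨y, hy, hlt, h1⟩
      have hlt : y 0 < x0 := lt_of_le_of_ne hge (hne y hy 0)
      have hm := ((zgap_pos_iff y).1 hy.1).1.monotone
      refine ih _ (zcyc_rotate hper hy) ?_ ?_ ?_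
      · simp [Fin.last_add_one]; linarith
      · have := hm (Fin.zero_le (0 + 1))
        split_ifs <;> linarith
      · intro i hi
        split_ifs with hl
        · rw [hl, Fin.last_add_one]; linarith
        · have := h3 (i + 1) (by
            rw [Fin.val_add_one_of_lt (lt_of_le_of_ne (Fin.le_last i) hl)]; omega)
          linarith
  have hpi : ∀ x (m : ℤ), φ (x + m) = φ x := by
    intro x m
    have : Function.Periodic φ 1 := fun x => hper x
    simpa using this.int_mul m x
  set m : ℤ := -⌊x (Fin.last n) - x0⌋ with hm
  have f1 := Int.floor_le (x (Fin.last n) - x0)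
  have f2 := Int.lt_floor_add_one (x (Fin.last n) - x0)
  have hx := (zgap_pos_iff x).1 h.1
  refine main (n + 1) (fun i => x i + m) ⟨fun j => ?_, fun i => ?_⟩ ?_ ?_ ?_
  · rw [zgap_shift]; exact h.1 j
  · simp only [hpi]; exact h.2 i
  · rw [hm]; push_cast; linarith
  · rw [hm]; push_cast; linarith [hx.2]
  · intro i hi; have := i.2; omega

lemma zcyc_cons2 {φ : ℝ → ℝ} {n : ℕ} {y : Fin (n + 1) → ℝ} (h : ZCyc φ n y) {a b : ℝ}
    (hab : a < b) (hb : b < y 0) (ha : y (Fin.last n) < a + 1) (h1 : φ a * φ b < 0)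
    (h2 : φ b * φ (y 0) < 0) (h3 : φ (y (Fin.last n)) * φ a < 0) :
    ZCyc φ (n + 2) (Fin.cons a (Fin.cons b y : Fin (n + 2) → ℝ) : Fin (n + 3) → ℝ) := by
  obtain ⟨⟨g1, g2⟩, g3, g4⟩ := zcyc_iff.1 h
  rw [zcyc_iff]
  have hl : Fin.last (n + 2) = (Fin.last n).succ.succ := rfl
  refine ⟨⟨?_, ?_⟩, ?_, ?_⟩
  · refine Fin.cases ?_ (Fin.cases ?_ fun i => ?_)
    · simpa using hab
    · exact hb
    · simpa [← Fin.succ_castSucc] using g1 i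
  · rw [hl]; simpa using ha
  · refine Fin.cases ?_ (Fin.cases ?_ fun i => ?_)
    · simpa using h1
    · exact h2
    · simpa [← Fin.succ_castSucc] using g3 i
  · rw [hl]; simpa using h3

lemma neg_mul_trans {a b c : ℝ} (h1 : a * b < 0) (h2 : b * c < 0) : 0 < a * c := by
  rcases mul_neg_iff.1 h1 with h | h <;> rcases mul_neg_iff.1 h2 with h' | h' <;>
    first | exact mul_pos h.1 h'.2 | exact mul_pos_of_neg_of_neg h.1 h'.2 | (exfalso; linarith [h.1, h.2, h'.1, h'.2])

lemma neg_mul_pos {a b c : ℝ} (h1 : a * b < 0) (h2 : 0 < b * c) : a * c < 0 := by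
  rcases mul_neg_iff.1 h1 with h | h <;> rcases mul_pos_iff.1 h2 with h' | h' <;>
    first | exact mul_neg_of_pos_of_neg h.1 h'.2 | exact mul_neg_of_neg_of_pos h.1 h'.2 | (exfalso; linarith [h.1, h.2, h'.1, h'.2])

lemma triple_contra {v vt vx vxx : ℝ → ℝ → ℝ} {B C : ℝ} (S : ZSol v vt vx vxx B C)
    (hconst : ∀ t s, zeroNumber (v t) = zeroNumber (v s)) {t0 x0 : ℝ} (h0 : v t0 x0 = 0)
    (H : ∀ r > 0, ∃ τ, 0 < τ ∧ τ < r ∧ ∃ a b c, x0 - r ≤ a ∧ a < b ∧ b < c ∧ c ≤ x0 + r ∧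
      v (t0 - τ) a * v (t0 - τ) b < 0 ∧ v (t0 - τ) b * v (t0 - τ) c < 0) : False := by
  obtain ⟨N, hN⟩ := zn_finite S
  have hfin : zeroNumber (v t0) ≠ ⊤ := ne_top_of_le_ne_top (ENat.natCast_ne_top N) (hN t0)
  rcases zn_attained hfin with hz | ⟨n, x, hx, hz⟩
  · obtain ⟨τ, -, -, a, b, c, h1, h2, h3, h4, h5, h6⟩ := H (1 / 4) (by norm_num)
    have : ZCyc (v (t0 - τ)) 1 ![a, b] := by
      rw [zcyc_iff]
      refine ⟨⟨?_, ?_⟩, ?_, ?_⟩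
      · intro i; fin_cases i; simpa using h2
      · simp [show Fin.last 1 = 1 from rfl]; linarith
      · intro i; fin_cases i; simpa using h5
      · simp [show Fin.last 1 = 1 from rfl]; linarith
    have := zn_le this
    rw [hconst _ t0, hz] at this
    simp at this
  · obtain ⟨y, hy, hy0, hyl⟩ := zcyc_position (S.per t0) h0 hx
    obtain ⟨σ, s1, s2, s3⟩ := zcyc_sign hy
    have hev : ∀ᶠ r in nhds t0, ∀ i, 0 < σ i * v r (y i) := by
      rw [Filter.eventually_all]
      intro i
      exact ((S.ht t0 (y i)).const_mul (σ i)).continuousAt.eventually (lt_mem_nhds (s3 i))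
    obtain ⟨δ, hδ, hδs⟩ := Metric.eventually_nhds_iff.1 hev
    obtain ⟨r, hr0, hr⟩ : ∃ r > 0, r < δ ∧ r < y 0 - x0 ∧ r < x0 + 1 - y (Fin.last n) := by
      obtain ⟨r, h1, h2⟩ := exists_between
        (lt_min hδ (lt_min (sub_pos.2 hy0) (sub_pos.2 hyl)))
      rw [lt_min_iff, lt_min_iff] at h2
      exact ⟨r, h1, h2⟩
    obtain ⟨τ, ht1, ht2, a, b, c, h1, h2, h3, h4, h5, h6⟩ := H r hr0
    have hyτ : ZCyc (v (t0 - τ)) n y := zcyc_of_sign hy.1 s2 (hδs (by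
      rw [Real.dist_eq, abs_lt]; constructor <;> linarith [hr.1]))
    have hcy := (zcyc_iff.1 hyτ).2.2
    have key : ∃ z, ZCyc (v (t0 - τ)) (n + 2) z := by
      rcases lt_or_ge (v (t0 - τ) c * v (t0 - τ) (y 0)) 0 with hc | hc
      · have e1 : 0 < v (t0 - τ) c * v (t0 - τ) (y (Fin.last n)) :=
          neg_mul_trans hc (by linarith)
        have := neg_mul_pos h6 e1
        exact ⟨_, zcyc_cons2 hyτ h3 (by linarith [hr.2.1]) (by linarith [hr.2.2]) h6 hc
          (by linarith)⟩
      · have hc' : 0 < v (t0 - τ) c * v (t0 - τ) (y 0) := by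
          refine lt_of_le_of_ne hc (Ne.symm (mul_ne_zero ?_ ?_))
          · intro h; rw [h] at h6; simp at h6
          · intro h; rw [h] at hcy; simp at hcy
        have e1 := neg_mul_pos h6 hc'
        have e2 : 0 < v (t0 - τ) b * v (t0 - τ) (y (Fin.last n)) :=
          neg_mul_trans e1 (by linarith)
        have := neg_mul_pos h5 e2
        exact ⟨_, zcyc_cons2 hyτ h2 (by linarith [hr.2.1]) (by linarith [hr.2.2]) h5 e1
          (by linarith)⟩
    obtain ⟨z, hzc⟩ := key
    have := zn_le hzc
    rw [hconst _ t0, hz] at this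
    have : n + 2 + 1 ≤ n + 1 := by exact_mod_cast this
    omega

end

section

open MeasureTheory


/-- Gaussian weight -/
noncomputable def gw (y : ℝ) : ℝ := Real.exp (-(1 / 4) * y ^ 2)

lemma gw_pos (y : ℝ) : 0 < gw y := Real.exp_pos _

lemma gw_cont : Continuous gw := by unfold gw; fun_prop

lemma gw_deriv (y : ℝ) : HasDerivAt gw (-(y / 2) * gw y) y := by
  have := ((hasDerivAt_pow 2 y).const_mul (-(1 / 4 : ℝ))).exp
  refine this.congr_deriv ?_
  unfold gw
  push_cast
  ring

/-- continuous functions with polynomial growth -/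
def PG (f : ℝ → ℝ) : Prop := Continuous f ∧ ∃ A : ℝ, ∃ m : ℕ, 0 ≤ A ∧ ∀ y, |f y| ≤ A * (1 + y ^ 2) ^ m

lemma PG.mul {f g : ℝ → ℝ} (hf : PG f) (hg : PG g) : PG (fun y => f y * g y) := by
  obtain ⟨hf, A, m, hA, h1⟩ := hf
  obtain ⟨hg, A', m', hA', h2⟩ := hg
  refine ⟨hf.mul hg, A * A', m + m', mul_nonneg hA hA', fun y => ?_⟩
  rw [abs_mul, pow_add]
  calc _ ≤ (A * (1 + y ^ 2) ^ m) * (A' * (1 + y ^ 2) ^ m') :=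
        mul_le_mul (h1 y) (h2 y) (abs_nonneg _) (by positivity)
    _ = _ := by ring

lemma PG.add {f g : ℝ → ℝ} (hf : PG f) (hg : PG g) : PG (fun y => f y + g y) := by
  obtain ⟨hf, A, m, hA, h1⟩ := hf
  obtain ⟨hg, A', m', hA', h2⟩ := hg
  refine ⟨hf.add hg, A + A', m + m', add_nonneg hA hA', fun y => ?_⟩
  have h3 : (1 : ℝ) ≤ 1 + y ^ 2 := by nlinarith [sq_nonneg y]
  have h4 : (1 + y ^ 2) ^ m ≤ (1 + y ^ 2) ^ (m + m') := pow_le_pow_right₀ h3 (by omega)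
  have h5 : (1 + y ^ 2) ^ m' ≤ (1 + y ^ 2) ^ (m + m') := pow_le_pow_right₀ h3 (by omega)
  calc _ ≤ |f y| + |g y| := abs_add_le _ _
    _ ≤ A * (1 + y ^ 2) ^ m + A' * (1 + y ^ 2) ^ m' := add_le_add (h1 y) (h2 y)
    _ ≤ A * (1 + y ^ 2) ^ (m + m') + A' * (1 + y ^ 2) ^ (m + m') := by gcongr
    _ = _ := by ring

lemma PG.const (c : ℝ) : PG (fun _ => c) :=
  ⟨continuous_const, |c|, 0, abs_nonneg _, fun y => by simp⟩

lemma PG.id : PG (fun y => y) :=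
  ⟨continuous_id, 1, 1, zero_le_one, fun y => by
    rw [abs_le]; constructor <;> nlinarith [sq_nonneg (y - 1), sq_nonneg (y + 1)]⟩

lemma PG.abs {f : ℝ → ℝ} (hf : PG f) : PG (fun y => |f y|) := by
  obtain ⟨hf, A, m, hA, h1⟩ := hf
  exact ⟨hf.abs, A, m, hA, fun y => by rw [abs_abs]; exact h1 y⟩

lemma PG.cmul {f : ℝ → ℝ} (c : ℝ) (hf : PG f) : PG (fun y => c * f y) := (PG.const c).mul hf

lemma PG.neg {f : ℝ → ℝ} (hf : PG f) : PG (fun y => - f y) := by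
  simpa using hf.cmul (-1)

lemma PG.sub {f g : ℝ → ℝ} (hf : PG f) (hg : PG g) : PG (fun y => f y - g y) := by
  simpa [sub_eq_add_neg] using hf.add hg.neg

lemma PG.sq {f : ℝ → ℝ} (hf : PG f) : PG (fun y => f y ^ 2) := by
  simpa [pow_two] using hf.mul hf

lemma PG.poly (A : ℝ) (m : ℕ) : PG (fun y => A * (1 + y ^ 2) ^ m) := by
  refine ⟨by fun_prop, |A|, m, abs_nonneg _, fun y => ?_⟩
  rw [abs_mul, abs_of_nonneg (a := (1 + y ^ 2) ^ m) (by positivity)]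

lemma poly_gw_integrable (m : ℕ) : Integrable (fun y : ℝ => (1 + y ^ 2) ^ m * gw y) := by
  have hpow : ∀ j : ℕ, Integrable (fun y : ℝ => y ^ j * gw y) := by
    intro j
    have := integrable_rpow_mul_exp_neg_mul_sq (b := 1 / 4) (by norm_num) (s := (j : ℝ))
      (by have : (0 : ℝ) ≤ j := Nat.cast_nonneg j
          linarith)
    simpa [gw] using this
  have : (fun y : ℝ => (1 + y ^ 2) ^ m * gw y) =
      fun y => ∑ j ∈ Finset.range (m + 1), (m.choose j : ℝ) * (y ^ (2 * (m - j)) * gw y) := by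
    funext y
    rw [add_pow, Finset.sum_mul]
    refine Finset.sum_congr rfl fun j _ => ?_
    rw [one_pow, pow_mul]; ring
  rw [this]
  exact integrable_finsetSum _ fun j _ => (hpow _).const_mul _

lemma PG.int {f : ℝ → ℝ} (hf : PG f) : Integrable (fun y => f y * gw y) := by
  obtain ⟨hf, A, m, hA, h1⟩ := hf
  refine ((poly_gw_integrable m).const_mul A).mono' (hf.mul gw_cont).aestronglyMeasurable ?_
  refine Filter.Eventually.of_forall fun y => ?_
  rw [Real.norm_eq_abs, abs_mul, abs_of_pos (gw_pos y), ← mul_assoc]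
  exact mul_le_mul_of_nonneg_right (h1 y) (gw_pos y).le

/-- Gaussian integral -/
noncomputable def GI (f : ℝ → ℝ) : ℝ := ∫ y, f y * gw y

lemma GI_add {f g : ℝ → ℝ} (hf : PG f) (hg : PG g) :
    GI (fun y => f y + g y) = GI f + GI g := by
  unfold GI
  rw [← integral_add hf.int hg.int]
  simp only [add_mul]

lemma GI_sub {f g : ℝ → ℝ} (hf : PG f) (hg : PG g) :
    GI (fun y => f y - g y) = GI f - GI g := by
  unfold GI
  rw [← integral_sub hf.int hg.int]
  simp only [sub_mul]

lemma GI_cmul (c : ℝ) (f : ℝ → ℝ) : GI (fun y => c * f y) = c * GI f := by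
  unfold GI
  rw [← integral_const_mul]
  simp only [mul_assoc]

lemma GI_mono {f g : ℝ → ℝ} (hf : PG f) (hg : PG g) (h : ∀ y, f y ≤ g y) : GI f ≤ GI g :=
  integral_mono hf.int hg.int fun y => mul_le_mul_of_nonneg_right (h y) (gw_pos y).le

lemma GI_nonneg {f : ℝ → ℝ} (h : ∀ y, 0 ≤ f y) : 0 ≤ GI f :=
  integral_nonneg fun y => mul_nonneg (h y) (gw_pos y).le

lemma GI_abs {f : ℝ → ℝ} : |GI f| ≤ GI (fun y => |f y|) := by
  unfold GI
  refine (abs_integral_le_integral_abs).trans (le_of_eq ?_)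
  congr 1; funext y
  rw [abs_mul, abs_of_pos (gw_pos y)]

lemma GI_pos {f : ℝ → ℝ} (hf : PG f) (h : ∀ y, 0 ≤ f y) {y0 : ℝ} (h0 : f y0 ≠ 0) : 0 < GI f := by
  unfold GI
  rw [integral_pos_iff_support_of_nonneg (fun y => mul_nonneg (h y) (gw_pos y).le) hf.int]
  refine IsOpen.measure_pos _ (hf.1.mul gw_cont).isOpen_support ⟨y0, ?_⟩
  exact mul_ne_zero h0 (gw_pos y0).ne'

/-- integration by parts -/
lemma GI_ibp {g g' : ℝ → ℝ} (hg : PG g) (hg' : PG g') (hd : ∀ y, HasDerivAt g (g' y) y) :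
    GI (fun y => g' y - y / 2 * g y) = 0 := by
  have hp : PG (fun y => g' y - y / 2 * g y) := by
    refine hg'.sub ?_
    have := (PG.id.cmul (1 / 2)).mul hg
    refine (by simpa [div_eq_inv_mul] using this)
  have h1 : ∀ y, HasDerivAt (fun y => g y * gw y) ((g' y - y / 2 * g y) * gw y) y := by
    intro y
    refine ((hd y).mul (gw_deriv y)).congr_deriv ?_
    ring
  exact integral_eq_zero_of_hasDerivAt_of_integrable h1 hp.int hg.int

lemma GI_cs {f g : ℝ → ℝ} (hf : PG f) (hg : PG g) :
    GI (fun y => f y * g y) ^ 2 ≤ GI (fun y => f y ^ 2) * GI (fun y => g y ^ 2) := by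
  have h : ∀ t : ℝ, 0 ≤ GI (fun y => f y ^ 2) * (t * t) + 2 * GI (fun y => f y * g y) * t +
      GI (fun y => g y ^ 2) := by
    intro t
    have h1 : 0 ≤ GI (fun y => (t * t) * f y ^ 2 + (2 * t) * (f y * g y) + g y ^ 2) :=
      GI_nonneg fun y => by nlinarith [sq_nonneg (t * f y + g y)]
    rw [GI_add ((hf.sq.cmul _).add ((hf.mul hg).cmul _)) hg.sq,
      GI_add (hf.sq.cmul _) ((hf.mul hg).cmul _), GI_cmul, GI_cmul] at h1
    linarith
  have := discrim_le_zero h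
  unfold discrim at this
  nlinarith

lemma GI_cs' {f g : ℝ → ℝ} (hf : PG f) (hg : PG g) :
    GI (fun y => |f y| * |g y|) ≤ √(GI (fun y => f y ^ 2)) * √(GI (fun y => g y ^ 2)) := by
  rw [← Real.sqrt_mul (GI_nonneg fun y => sq_nonneg _)]
  refine Real.le_sqrt_of_sq_le ?_
  have := GI_cs hf.abs hg.abs
  simpa [sq_abs] using this

/-- Hardy type inequality -/
lemma GI_hardy {u ux : ℝ → ℝ} (hu : PG u) (hux : PG ux) (hd : ∀ y, HasDerivAt u (ux y) y) :
    GI (fun y => y ^ 2 * u y ^ 2) ≤ 4 * GI (fun y => u y ^ 2) + 16 * GI (fun y => ux y ^ 2) := by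
  have hq : PG (fun y => y ^ 2 * u y ^ 2) := PG.id.sq.mul hu.sq
  have e1 := GI_ibp (g := fun y => y * u y ^ 2) (g' := fun y => u y ^ 2 + 2 * (y * (u y * ux y)))
    (PG.id.mul hu.sq) (hu.sq.add ((PG.id.mul (hu.mul hux)).cmul 2)) (fun y => by
      refine ((hasDerivAt_id y).mul ((hd y).fun_pow 2)).congr_deriv ?_
      simp; ring)
  have h2 : GI (fun y => (1 / 4) * (y ^ 2 * u y ^ 2) - u y ^ 2 - 4 * ux y ^ 2) ≤ 0 := by
    rw [← e1.le.antisymm e1.ge] 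
    have hp : PG (fun y => u y ^ 2 + 2 * (y * (u y * ux y)) - y / 2 * (y * u y ^ 2)) := by
      have : PG (fun y => u y ^ 2 + 2 * (y * (u y * ux y)) - (1 / 2) * (y ^ 2 * u y ^ 2)) :=
        (hu.sq.add ((PG.id.mul (hu.mul hux)).cmul 2)).sub (hq.cmul _)
      convert this using 3
      ring
    have : GI (fun y => (1 / 4) * (y ^ 2 * u y ^ 2) - u y ^ 2 - 4 * ux y ^ 2) ≤
        GI (fun y => (-1) * (u y ^ 2 + 2 * (y * (u y * ux y)) - y / 2 * (y * u y ^ 2))) := by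
      refine GI_mono (((hq.cmul _).sub hu.sq).sub (hux.sq.cmul _)) (hp.cmul _) fun y => ?_
      nlinarith [sq_nonneg (y * u y - 4 * ux y)]
    rw [GI_cmul, e1] at this
    rw [e1]
    linarith
  rw [GI_sub ((hq.cmul _).sub hu.sq) (hux.sq.cmul _), GI_sub (hq.cmul _) hu.sq, GI_cmul,
    GI_cmul] at h2
  linarith

/-- pointwise bound -/
lemma GI_pointwise {u ux : ℝ → ℝ} (hu : PG u) (hux : PG ux) (hd : ∀ y, HasDerivAt u (ux y) y)
    {M : ℝ} (hM : GI (fun y => ux y ^ 2) ≤ M * GI (fun y => u y ^ 2)) (y : ℝ) :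
    u y ^ 2 * gw y ≤ (5 + 5 * M) * GI (fun y => u y ^ 2) := by
  have hq : PG (fun y => y ^ 2 * u y ^ 2) := PG.id.sq.mul hu.sq
  have hp : PG (fun y => 2 * (u y * ux y) - y / 2 * u y ^ 2) := by
    have : PG (fun y => 2 * (u y * ux y) - (1 / 2) * (y * u y ^ 2)) :=
      ((hu.mul hux).cmul 2).sub ((PG.id.mul hu.sq).cmul _)
    convert this using 3
    ring
  have h1 : ∀ y, HasDerivAt (fun y => u y ^ 2 * gw y)
      ((2 * (u y * ux y) - y / 2 * u y ^ 2) * gw y) y := by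
    intro y
    refine (((hd y).fun_pow 2).mul (gw_deriv y)).congr_deriv ?_
    simp; ring
  have ht := tendsto_zero_of_hasDerivAt_of_integrableOn_Iic (a := y) (fun y _ => h1 y)
    hp.int.integrableOn hu.sq.int.integrableOn
  have e1 := integral_Iic_of_hasDerivAt_of_tendsto' (a := y) (fun y _ => h1 y)
    hp.int.integrableOn ht
  rw [sub_zero] at e1
  rw [← e1]
  have hb : PG (fun y => (5 / 4) * u y ^ 2 + ux y ^ 2 + (1 / 4) * (y ^ 2 * u y ^ 2)) :=
    ((hu.sq.cmul _).add hux.sq).add (hq.cmul _)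
  have hpt : ∀ y, |2 * (u y * ux y) - y / 2 * u y ^ 2| ≤
      (5 / 4) * u y ^ 2 + ux y ^ 2 + (1 / 4) * (y ^ 2 * u y ^ 2) := by
    intro y
    rw [abs_le]
    constructor <;> nlinarith [sq_nonneg (u y - ux y), sq_nonneg (u y + ux y),
      mul_nonneg (sq_nonneg (y - 1)) (sq_nonneg (u y)), mul_nonneg (sq_nonneg (y + 1)) (sq_nonneg (u y))]
  calc _ ≤ ∫ y in Iic y, ((5 / 4) * u y ^ 2 + ux y ^ 2 + (1 / 4) * (y ^ 2 * u y ^ 2)) * gw y := by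
        refine integral_mono hp.int.integrableOn hb.int.integrableOn fun y => ?_
        exact mul_le_mul_of_nonneg_right ((le_abs_self _).trans (hpt y)) (gw_pos y).le
    _ ≤ GI (fun y => (5 / 4) * u y ^ 2 + ux y ^ 2 + (1 / 4) * (y ^ 2 * u y ^ 2)) := by
        refine setIntegral_le_integral hb.int (Filter.Eventually.of_forall fun y => ?_)
        exact mul_nonneg ((abs_nonneg _).trans (hpt y)) (gw_pos y).le
    _ ≤ _ := by
        rw [GI_add ((hu.sq.cmul _).add hux.sq) (hq.cmul _), GI_add (hu.sq.cmul _) hux.sq, GI_cmul,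
          GI_cmul]
        have := GI_hardy hu hux hd
        nlinarith [GI_nonneg (f := fun y => u y ^ 2) fun y => sq_nonneg _]

end

section

open MeasureTheory


lemma sign_lower (M : ℝ) (hM0 : 0 ≤ M) : ∃ c0 > 0, ∀ u ux : ℝ → ℝ, PG u → PG ux →
    (∀ y, HasDerivAt u (ux y) y) → 0 < GI (fun y => u y ^ 2) →
    GI (fun y => ux y ^ 2) ≤ M * GI (fun y => u y ^ 2) → ∀ c : ℝ,
    c0 * √(GI (fun y => u y ^ 2)) ≤ GI (fun y => |y - c| * |u y|) := by
  set A : ℝ := 5 + 5 * M with hA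
  have hApos : 0 < A := by positivity
  set R2 : ℝ := 4 * (4 + 16 * M) with hR2
  have hR2pos : 0 < R2 := by positivity
  set ρ : ℝ := 1 / (8 * A) with hρ
  have hρpos : 0 < ρ := by positivity
  set E : ℝ := Real.exp (R2 / 8) with hE
  have hEpos : 0 < E := Real.exp_pos _
  have hsA : 0 < √A := Real.sqrt_pos.2 hApos
  refine ⟨ρ / (2 * √A * E), by positivity, fun u ux hu hux hd hpos hM c => ?_⟩
  set h : ℝ := GI (fun y => u y ^ 2) with hh
  have hsh : 0 < √h := Real.sqrt_pos.2 hpos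
  set J : ℝ := GI (fun y => |y - c| * |u y|) with hJ
  have hpw := GI_pointwise hu hux hd hM
  have hJp : PG (fun y => |y - c| * |u y|) := (PG.id.sub (PG.const c)).abs.mul hu.abs
  have hq : PG (fun y => y ^ 2 * u y ^ 2) := PG.id.sq.mul hu.sq
  set ind : ℝ → ℝ := (Ioo (c - ρ) (c + ρ)).indicator (fun _ => A * h) with hind
  have hii : Integrable ind := by
    rw [hind, integrable_indicator_iff measurableSet_Ioo]
    exact integrableOn_const (by simp)
  have hindI : ∫ y, ind y = 2 * ρ * (A * h) := by
    rw [hind, integral_indicator measurableSet_Ioo, setIntegral_const]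
    simp only [smul_eq_mul]
    rw [Real.volume_real_Ioo_of_le (by linarith)]
    ring
  have hpoint : ∀ y, u y ^ 2 * gw y ≤ ind y + ((1 / R2) * (y ^ 2 * u y ^ 2)) * gw y +
      ((√A * √h * E / ρ) * (|y - c| * |u y|)) * gw y := by
    intro y
    have hw := gw_pos y
    have t2 : 0 ≤ ((1 / R2) * (y ^ 2 * u y ^ 2)) * gw y := by positivity
    have t3 : 0 ≤ ((√A * √h * E / ρ) * (|y - c| * |u y|)) * gw y := by positivity
    have t1 : 0 ≤ ind y := indicator_nonneg (fun _ _ => by positivity) y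
    by_cases hy : y ∈ Ioo (c - ρ) (c + ρ)
    · have : ind y = A * h := by rw [hind, indicator_of_mem hy]
      rw [this]
      linarith [hpw y]
    · have hyc : ρ ≤ |y - c| := by
        by_contra hcon
        push Not at hcon
        rw [abs_lt] at hcon
        exact hy ⟨by linarith, by linarith⟩
      rcases lt_or_ge R2 (y ^ 2) with hlt | hge
      · have : u y ^ 2 ≤ (1 / R2) * (y ^ 2 * u y ^ 2) := by
          rw [one_div, ← div_eq_inv_mul, le_div_iff₀ hR2pos]
          nlinarith [sq_nonneg (u y)]
        have := mul_le_mul_of_nonneg_right this hw.le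
        linarith
      · have hb : |u y| ≤ √A * √h * E := by
          refine abs_le_of_sq_le_sq ?_ (by positivity)
          have e1 : (√A * √h * E) ^ 2 = A * h * E ^ 2 := by
            rw [mul_pow, mul_pow, Real.sq_sqrt hApos.le, Real.sq_sqrt hpos.le]
          rw [e1]
          have e2 : 1 ≤ gw y * E ^ 2 := by
            rw [hE, gw, pow_two (Real.exp _), ← Real.exp_add, ← Real.exp_add]
            refine Real.one_le_exp ?_
            linarith
          nlinarith [hpw y, sq_nonneg (u y), sq_nonneg E, mul_le_mul_of_nonneg_right (hpw y) (sq_nonneg E), mul_le_mul_of_nonneg_left e2 (sq_nonneg (u y))]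
        have : u y ^ 2 ≤ (√A * √h * E / ρ) * (|y - c| * |u y|) := by
          calc u y ^ 2 = |u y| * |u y| := by rw [← pow_two, sq_abs]
            _ ≤ (√A * √h * E) * |u y| := mul_le_mul_of_nonneg_right hb (abs_nonneg _)
            _ = (√A * √h * E / ρ) * (ρ * |u y|) := by field_simp
            _ ≤ _ := by gcongr
        have := mul_le_mul_of_nonneg_right this hw.le
        linarith
  have hmain1 : h ≤ 2 * ρ * (A * h) + (1 / R2) * GI (fun y => y ^ 2 * u y ^ 2) +
      (√A * √h * E / ρ) * J := by
    have i2 := (hq.cmul (1 / R2)).int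
    have i3 := (hJp.cmul (√A * √h * E / ρ)).int
    have := integral_mono hu.sq.int ((hii.add i2).add i3) hpoint
    have e : ∫ y, (ind y + ((1 / R2) * (y ^ 2 * u y ^ 2)) * gw y +
      ((√A * √h * E / ρ) * (|y - c| * |u y|)) * gw y) = 2 * ρ * (A * h) +
        (1 / R2) * GI (fun y => y ^ 2 * u y ^ 2) + (√A * √h * E / ρ) * J := by
      have i23 : Integrable (fun y => ind y + ((1 / R2) * (y ^ 2 * u y ^ 2)) * gw y) := hii.add i2
      rw [integral_add i23 i3, integral_add hii i2, hindI, hJ,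
        ← GI_cmul (1 / R2) (fun y => y ^ 2 * u y ^ 2),
        ← GI_cmul (√A * √h * E / ρ) (fun y => |y - c| * |u y|)]
      rfl
    exact this.trans e.le
  have hardy := GI_hardy hu hux hd
  have g1 : 2 * ρ * (A * h) = h / 4 := by rw [hρ]; field_simp; norm_num
  have g2 : (1 / R2) * GI (fun y => y ^ 2 * u y ^ 2) ≤ h / 4 := by
    rw [one_div, ← div_eq_inv_mul, div_le_iff₀ hR2pos, hR2]
    nlinarith
  have g3 : h / 2 ≤ (√A * √h * E / ρ) * J := by linarith
  have g4 : √h / 2 ≤ (√A * E / ρ) * J := by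
    have : √h * (√h / 2) ≤ √h * ((√A * E / ρ) * J) := by
      have e1 : √h * (√h / 2) = h / 2 := by
        rw [← mul_div_assoc, Real.mul_self_sqrt hpos.le]
      rw [e1]
      calc _ ≤ _ := g3
        _ = _ := by ring
    exact le_of_mul_le_mul_left this hsh
  calc _ = ρ / (√A * E) * (√h / 2) := by field_simp
    _ ≤ ρ / (√A * E) * ((√A * E / ρ) * J) := by gcongr
    _ = J := by field_simp

lemma extract_aux {u : ℝ → ℝ} {K : ℝ}
    (hno : ¬ ∃ a b c, -K ≤ a ∧ a < b ∧ b < c ∧ c ≤ K ∧ u a * u b < 0 ∧ u b * u c < 0)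
    {a b : ℝ} (ha : -K ≤ a) (hab : a < b) (hb : b ≤ K) (hua : u a < 0) (hub : 0 < u b) :
    ∃ c ∈ Icc (-K) K, ∀ y ∈ Icc (-K) K, 0 ≤ (y - c) * u y := by
  set s : Set ℝ := {y | y ∈ Icc (-K) K ∧ u y < 0} with hs
  have hbd : BddAbove s := ⟨K, fun y hy => hy.1.2⟩
  have has : a ∈ s := ⟨⟨ha, hab.le.trans hb⟩, hua⟩
  have hcs := le_csSup hbd has
  refine ⟨sSup s, ⟨ha.trans hcs, csSup_le ⟨a, has⟩ fun y hy => hy.1.2⟩, fun y hy => ?_⟩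
  rcases lt_trichotomy y (sSup s) with hlt | heq | hgt
  · have : u y ≤ 0 := by
      by_contra hcon
      push Not at hcon
      obtain ⟨z, hz, hyz⟩ := exists_lt_of_lt_csSup ⟨a, has⟩ hlt
      rcases lt_trichotomy a y with h1 | h1 | h1
      · exact hno ⟨a, y, z, ha, h1, hyz, hz.1.2, mul_neg_of_neg_of_pos hua hcon,
          mul_neg_of_pos_of_neg hcon hz.2⟩
      · rw [h1] at hua; linarith
      · exact hno ⟨y, a, b, hy.1, h1, hab, hb, mul_neg_of_pos_of_neg hcon hua,
          mul_neg_of_neg_of_pos hua hub⟩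
    exact mul_nonneg_of_nonpos_of_nonpos (by linarith) this
  · rw [heq]; simp
  · have : 0 ≤ u y := by
      by_contra hcon
      push Not at hcon
      have := le_csSup hbd (show y ∈ s from ⟨hy, hcon⟩)
      linarith
    exact mul_nonneg (by linarith) this

lemma extract {u : ℝ → ℝ} {K : ℝ} (hK : 0 < K)
    (hno : ¬ ∃ a b c, -K ≤ a ∧ a < b ∧ b < c ∧ c ≤ K ∧ u a * u b < 0 ∧ u b * u c < 0) :
    ∃ c ∈ Icc (-K) K, ∃ s : ℝ, (s = 1 ∨ s = -1) ∧ ∀ y ∈ Icc (-K) K, 0 ≤ s * ((y - c) * u y) := by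
  have hKm : -K ∈ Icc (-K) K := ⟨le_rfl, by linarith⟩
  by_cases h1 : ∀ y ∈ Icc (-K) K, 0 ≤ u y
  · refine ⟨-K, hKm, 1, Or.inl rfl, fun y hy => ?_⟩
    have := mul_nonneg (by linarith [hy.1] : 0 ≤ y - -K) (h1 y hy)
    linarith
  by_cases h2 : ∀ y ∈ Icc (-K) K, u y ≤ 0
  · refine ⟨-K, hKm, -1, Or.inr rfl, fun y hy => ?_⟩
    have := mul_nonneg (by linarith [hy.1] : 0 ≤ y - -K) (neg_nonneg.2 (h2 y hy))
    linarith
  push Not at h1 h2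
  obtain ⟨a, ha, hua⟩ := h1
  obtain ⟨b, hb, hub⟩ := h2
  rcases lt_trichotomy a b with hab | hab | hab
  · obtain ⟨c, hc, h⟩ := extract_aux hno ha.1 hab hb.2 hua hub
    exact ⟨c, hc, 1, Or.inl rfl, fun y hy => by linarith [h y hy]⟩
  · rw [hab] at hua; linarith
  · obtain ⟨c, hc, h⟩ := extract_aux (u := fun y => - u y) (by simpa using hno) hb.1 hab ha.2
      (by linarith) (by linarith)
    exact ⟨c, hc, -1, Or.inr rfl, fun y hy => by have := h y hy; linarith⟩

lemma sign_lemma (M : ℝ) (hM0 : 0 ≤ M) : ∃ K > 0, ∃ η > 0, ∀ u ux : ℝ → ℝ, PG u → PG ux →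
    (∀ y, HasDerivAt u (ux y) y) → 0 < GI (fun y => u y ^ 2) →
    GI (fun y => ux y ^ 2) ≤ M * GI (fun y => u y ^ 2) →
    |GI u| ≤ η * √(GI (fun y => u y ^ 2)) →
    |GI (fun y => y * u y)| ≤ η * √(GI (fun y => u y ^ 2)) →
    ∃ a b c, -K ≤ a ∧ a < b ∧ b < c ∧ c ≤ K ∧ u a * u b < 0 ∧ u b * u c < 0 := by
  obtain ⟨c0, hc0, hlow⟩ := sign_lower M hM0
  set Q : ℝ := √(GI (fun y => (y ^ 2) ^ 2)) with hQ
  have hQ0 : 0 ≤ Q := Real.sqrt_nonneg _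
  set K : ℝ := 8 * (Q + 1) / c0 with hK
  have hKpos : 0 < K := by positivity
  refine ⟨K, hKpos, c0 / (4 * (1 + K)), by positivity, fun u ux hu hux hd hpos hM h0 h1 => ?_⟩
  by_contra hno
  obtain ⟨c, hc, s, hs, hsgn⟩ := extract hKpos hno
  set h : ℝ := GI (fun y => u y ^ 2) with hh
  have hsh : 0 < √h := Real.sqrt_pos.2 hpos
  have hl := hlow u ux hu hux hd hpos hM c
  have hs1 : |s| = 1 := by rcases hs with rfl | rfl <;> simp
  have hpyu : PG (fun y => y * u y) := PG.id.mul hu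
  have hp2 : PG (fun y => |y ^ 2| * |u y|) := PG.id.sq.abs.mul hu.abs
  have hpt : ∀ y, |y - c| * |u y| ≤ s * (y * u y - c * u y) + (4 / K) * (|y ^ 2| * |u y|) := by
    intro y
    by_cases hy : y ∈ Icc (-K) K
    · have h1 := hsgn y hy
      have : |y - c| * |u y| = s * ((y - c) * u y) := by
        rw [← abs_mul, ← abs_of_nonneg h1, abs_mul s, hs1, one_mul]
      rw [this]
      have : 0 ≤ (4 / K) * (|y ^ 2| * |u y|) := by positivity
      nlinarith
    · have hyK : K < |y| := by
        by_contra hcon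
        push Not at hcon
        exact hy (abs_le.1 hcon)
      have hcK : |c| ≤ K := abs_le.2 hc
      have e1 : |y - c| ≤ 2 * |y| := (abs_sub _ _).trans (by linarith)
      have e2 : |y| ≤ (1 / K) * |y ^ 2| := by
        rw [one_div, ← div_eq_inv_mul, le_div_iff₀ hKpos, abs_pow, pow_two]
        exact mul_le_mul_of_nonneg_left hyK.le (abs_nonneg _)
      have e3 : -(|y - c| * |u y|) ≤ s * (y * u y - c * u y) := by
        have : |s * (y * u y - c * u y)| = |y - c| * |u y| := by
          rw [abs_mul, hs1, one_mul, ← sub_mul, abs_mul]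
        rw [← this]; exact neg_abs_le _
      have e4 : |y - c| ≤ 2 * ((1 / K) * |y ^ 2|) := by linarith
      have e5 := mul_le_mul_of_nonneg_right e4 (abs_nonneg (u y))
      have : (4 / K) * (|y ^ 2| * |u y|) = 2 * (2 * ((1 / K) * |y ^ 2|) * |u y|) := by ring
      linarith
  have hup := GI_mono ((PG.id.sub (PG.const c)).abs.mul hu.abs)
    (((hpyu.sub (hu.cmul c)).cmul s).add (hp2.cmul (4 / K))) hpt
  rw [GI_add ((hpyu.sub (hu.cmul c)).cmul s) (hp2.cmul (4 / K)), GI_cmul, GI_cmul,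
    GI_sub hpyu (hu.cmul c), GI_cmul] at hup
  have hcs := GI_cs' PG.id.sq hu
  have hcK : |c| ≤ K := abs_le.2 hc
  have b1 : s * (GI (fun y => y * u y) - c * GI u) ≤ (1 + K) * (c0 / (4 * (1 + K)) * √h) := by
    calc _ ≤ |s * (GI (fun y => y * u y) - c * GI u)| := le_abs_self _
      _ = |GI (fun y => y * u y) - c * GI u| := by rw [abs_mul, hs1, one_mul]
      _ ≤ |GI (fun y => y * u y)| + |c| * |GI u| := by
          rw [← abs_mul]; exact abs_sub _ _
      _ ≤ c0 / (4 * (1 + K)) * √h + K * (c0 / (4 * (1 + K)) * √h) := by gcongr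
      _ = _ := by ring
  have b2 : (1 + K) * (c0 / (4 * (1 + K)) * √h) = c0 / 4 * √h := by field_simp
  have b3 : (4 / K) * GI (fun y => |y ^ 2| * |u y|) ≤ c0 / 2 * √h := by
    calc _ ≤ (4 / K) * (Q * √h) := by gcongr
      _ = c0 / 2 * √h * (Q / (Q + 1)) := by rw [hK]; field_simp; ring
      _ ≤ c0 / 2 * √h * 1 := by
          gcongr
          rw [div_le_one (by positivity)]; linarith
      _ = _ := mul_one _
  have : 0 < c0 * √h := by positivity
  linarith

end

section

open MeasureTheory


/-- solutions of the rescaled (Ornstein-Uhlenbeck) problem -/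
structure OU (u ux uxx ut G : ℝ → ℝ → ℝ) (B C : ℝ) : Prop where
  hx : ∀ θ y, HasDerivAt (u θ) (ux θ y) y
  hxx : ∀ θ y, HasDerivAt (ux θ) (uxx θ y) y
  ht : ∀ θ y, HasDerivAt (fun s => u s y) (ut θ y) θ
  cu : Continuous (fun p : ℝ × ℝ => u p.1 p.2)
  cut : Continuous (fun p : ℝ × ℝ => ut p.1 p.2)
  cux : Continuous (fun p : ℝ × ℝ => ux p.1 p.2)
  cuxx : Continuous (fun p : ℝ × ℝ => uxx p.1 p.2)
  hB : 0 ≤ B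
  hC : 0 ≤ C
  bu : ∀ θ > 0, ∀ y, |u θ y| ≤ B
  bux : ∀ θ > 0, ∀ y, |ux θ y| ≤ B
  buxx : ∀ θ > 0, ∀ y, |uxx θ y| ≤ B
  but : ∀ θ > 0, ∀ y, |ut θ y| ≤ B * (1 + y ^ 2)
  eqn : ∀ θ y, ut θ y = uxx θ y - y / 2 * ux θ y + G θ y
  hG : ∀ θ > 0, ∀ y, |G θ y| ≤ C * Real.exp (-θ / 2) * (|u θ y| + |ux θ y|)
  dz : ∀ θ > 0, ∀ y, |u θ y| ≤ B * Real.exp (-θ) * (1 + y ^ 2)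
  nz : ∀ θ > 0, ∃ y, u θ y ≠ 0

namespace OU

variable {u ux uxx ut G : ℝ → ℝ → ℝ} {B C : ℝ}

lemma pu (S : OU u ux uxx ut G B C) {θ : ℝ} (h : 0 < θ) : PG (u θ) :=
  ⟨S.cu.comp (by fun_prop : Continuous fun y : ℝ => (θ, y)), B, 0, S.hB, fun y => by
    simpa using S.bu θ h y⟩

lemma pux (S : OU u ux uxx ut G B C) {θ : ℝ} (h : 0 < θ) : PG (ux θ) :=
  ⟨S.cux.comp (by fun_prop : Continuous fun y : ℝ => (θ, y)), B, 0, S.hB, fun y => by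
    simpa using S.bux θ h y⟩

lemma puxx (S : OU u ux uxx ut G B C) {θ : ℝ} (h : 0 < θ) : PG (uxx θ) :=
  ⟨S.cuxx.comp (by fun_prop : Continuous fun y : ℝ => (θ, y)), B, 0, S.hB, fun y => by
    simpa using S.buxx θ h y⟩

lemma put (S : OU u ux uxx ut G B C) {θ : ℝ} (h : 0 < θ) : PG (ut θ) :=
  ⟨S.cut.comp (by fun_prop : Continuous fun y : ℝ => (θ, y)), B, 1, S.hB, fun y => by
    simpa using S.but θ h y⟩

/-- the operator part -/
noncomputable def ell (ux uxx : ℝ → ℝ → ℝ) (θ y : ℝ) : ℝ := uxx θ y - y / 2 * ux θ y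

lemma pell (S : OU u ux uxx ut G B C) {θ : ℝ} (h : 0 < θ) : PG (ell ux uxx θ) := by
  have := (S.puxx h).sub ((PG.id.mul (S.pux h)).cmul (1 / 2))
  convert this using 2
  unfold ell; ring

lemma pG (S : OU u ux uxx ut G B C) {θ : ℝ} (h : 0 < θ) : PG (G θ) := by
  have := (S.put h).sub (S.pell h)
  convert this using 2
  unfold ell; rw [S.eqn]; ring

lemma lip (S : OU u ux uxx ut G B C) {θ θ' : ℝ} (h : 0 < θ) (h' : 0 < θ') (y : ℝ) :
    |u θ' y - u θ y| ≤ B * (1 + y ^ 2) * |θ' - θ| := by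
  have := (convex_Ioi (0 : ℝ)).norm_image_sub_le_of_norm_hasDerivWithin_le
    (f := fun s => u s y) (f' := fun s => ut s y) (C := B * (1 + y ^ 2))
    (fun s _ => (S.ht s y).hasDerivWithinAt) (fun s hs => S.but s hs y)
    (show θ ∈ Ioi 0 from h) (show θ' ∈ Ioi 0 from h')
  exact this

lemma deriv_lemma (S : OU u ux uxx ut G B C) {F : ℝ → ℝ} {k : ℝ → ℝ → ℝ} {θ : ℝ} (hθ : 0 < θ)
    {A : ℝ} {m : ℕ} (hkc : ∀ s > 0, Continuous (k s))
    (hkb : ∀ s > 0, ∀ y, |k s y| ≤ A * (1 + y ^ 2) ^ m)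
    (hkt : ∀ y, ContinuousAt (fun s => k s y) θ)
    (hF : ∀ s > 0, F s - F θ = GI (fun y => (u s y - u θ y) * k s y)) :
    HasDerivAt F (GI (fun y => ut θ y * k θ y)) θ := by
  rw [hasDerivAt_iff_tendsto_slope]
  have hev : ∀ᶠ s in nhdsWithin θ {θ}ᶜ, 0 < s :=
    nhdsWithin_le_nhds (lt_mem_nhds hθ)
  have hev' : ∀ᶠ s in nhdsWithin θ {θ}ᶜ, s ≠ θ := self_mem_nhdsWithin
  have key : Filter.Tendsto
      (fun s => ∫ y, ((s - θ)⁻¹ * (u s y - u θ y) * k s y) * gw y)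
      (nhdsWithin θ {θ}ᶜ) (nhds (∫ y, (ut θ y * k θ y) * gw y)) := by
    refine tendsto_integral_filter_of_dominated_convergence
      (fun y => (B * A) * ((1 + y ^ 2) ^ (m + 1) * gw y)) ?_ ?_ ?_ ?_
    · filter_upwards [hev] with s hs
      exact (((continuous_const.mul ((S.pu hs).1.sub (S.pu hθ).1)).mul (hkc s hs)).mul
        gw_cont).aestronglyMeasurable
    · filter_upwards [hev, hev'] with s hs hsθ
      refine Filter.Eventually.of_forall fun y => ?_
      have hne : 0 < |s - θ| := abs_pos.2 (sub_ne_zero.2 hsθ)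
      rw [Real.norm_eq_abs, abs_mul, abs_mul, abs_mul, abs_inv, abs_of_pos (gw_pos y)]
      have e1 : |s - θ|⁻¹ * |u s y - u θ y| ≤ B * (1 + y ^ 2) := by
        rw [← div_eq_inv_mul, div_le_iff₀ hne]
        exact S.lip hθ hs y
      have hB := S.hB
      calc _ ≤ (B * (1 + y ^ 2)) * (A * (1 + y ^ 2) ^ m) * gw y := by
            have := gw_pos y
            gcongr
            exact hkb s hs y
        _ = _ := by ring
    · exact (poly_gw_integrable (m + 1)).const_mul _
    · refine Filter.Eventually.of_forall fun y => ?_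
      refine Filter.Tendsto.mul_const _ (Filter.Tendsto.mul ?_ ?_)
      · have := hasDerivAt_iff_tendsto_slope.1 (S.ht θ y)
        refine this.congr fun s => ?_
        rw [slope_def_field]; ring
      · exact (hkt y).tendsto.mono_left nhdsWithin_le_nhds
  refine key.congr' ?_
  filter_upwards [hev] with s hs
  rw [slope_def_field, hF s hs, div_eq_inv_mul, ← GI_cmul]
  unfold GI
  congr 1; funext y; ring

/-- `h` -/
noncomputable def H (u : ℝ → ℝ → ℝ) (θ : ℝ) : ℝ := GI (fun y => u θ y ^ 2)

lemma ibp_ell (S : OU u ux uxx ut G B C) {θ : ℝ} (h : 0 < θ) {g g' : ℝ → ℝ} (hg : PG g)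
    (hg' : PG g') (hd : ∀ y, HasDerivAt g (g' y) y) :
    GI (fun y => ell ux uxx θ y * g y) = - GI (fun y => ux θ y * g' y) := by
  have e := GI_ibp (g := fun y => ux θ y * g y) (g' := fun y => uxx θ y * g y + ux θ y * g' y)
    ((S.pux h).mul hg) (((S.puxx h).mul hg).add ((S.pux h).mul hg'))
    (fun y => (S.hxx θ y).mul (hd y))
  have e2 := GI_add ((S.pell h).mul hg) ((S.pux h).mul hg')
  have e3 : (fun y => ell ux uxx θ y * g y + ux θ y * g' y) =
      fun y => uxx θ y * g y + ux θ y * g' y - y / 2 * (ux θ y * g y) := by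
    funext y; unfold ell; ring
  rw [e3, e] at e2
  linarith

lemma H_pos (S : OU u ux uxx ut G B C) {θ : ℝ} (h : 0 < θ) : 0 < H u θ := by
  obtain ⟨y, hy⟩ := S.nz θ h
  exact GI_pos (S.pu h).sq (fun y => sq_nonneg _) (pow_ne_zero 2 hy)

lemma H_deriv (S : OU u ux uxx ut G B C) {θ : ℝ} (h : 0 < θ) :
    HasDerivAt (H u) (-2 * H ux θ + 2 * GI (fun y => G θ y * u θ y)) θ := by
  have := S.deriv_lemma (F := H u) (k := fun s y => u s y + u θ y) (θ := θ) h (A := 2 * B) (m := 0)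
    (fun s hs => (S.pu hs).1.add (S.pu h).1)
    (fun s hs y => by
      have := S.bu s hs y
      have := S.bu θ h y
      have := abs_add_le (u s y) (u θ y)
      simp; linarith)
    (fun y => (S.ht θ y).continuousAt.add continuousAt_const)
    (fun s hs => by
      unfold H
      rw [← GI_sub (S.pu hs).sq (S.pu h).sq]
      congr 1; funext y; ring)
  refine this.congr_deriv ?_
  have e1 := S.ibp_ell h (S.pu h) (S.pux h) (S.hx θ)
  have e2 : (fun y => ut θ y * (u θ y + u θ y)) =
      fun y => 2 * (ell ux uxx θ y * u θ y) + 2 * (G θ y * u θ y) := by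
    funext y; rw [S.eqn]; unfold ell; ring
  rw [e2, GI_add (((S.pell h).mul (S.pu h)).cmul 2) (((S.pG h).mul (S.pu h)).cmul 2), GI_cmul,
    GI_cmul, e1]
  unfold H
  simp only [pow_two]
  ring

lemma D_deriv (S : OU u ux uxx ut G B C) {θ : ℝ} (h : 0 < θ) :
    HasDerivAt (H ux) (-2 * H (ell ux uxx) θ - 2 * GI (fun y => G θ y * ell ux uxx θ y)) θ := by
  have hellb : ∀ s > 0, ∀ y, |ell ux uxx s y| ≤ 2 * B * (1 + y ^ 2) ^ 1 := by
    intro s hs y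
    have h1 := S.buxx s hs y
    have h2 := S.bux s hs y
    have hB := S.hB
    unfold ell
    have h3 : |y / 2 * ux s y| ≤ (1 + y ^ 2) * B := by
      rw [abs_mul]
      refine mul_le_mul ?_ h2 (abs_nonneg _) (by positivity)
      rw [abs_le]; constructor <;> nlinarith [sq_nonneg (y - 1), sq_nonneg (y + 1)]
    have h4 := abs_sub (uxx s y) (y / 2 * ux s y)
    nlinarith [mul_nonneg hB (sq_nonneg y)]
  have hcell : ∀ y, ContinuousAt (fun s => ell ux uxx s y) θ := by
    intro y
    have c1 := S.cuxx.comp (by fun_prop : Continuous fun s : ℝ => (s, y))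
    have c2 := S.cux.comp (by fun_prop : Continuous fun s : ℝ => (s, y))
    exact (c1.sub (continuous_const.mul c2)).continuousAt
  have := S.deriv_lemma (F := H ux) (k := fun s y => -(ell ux uxx s y + ell ux uxx θ y)) (θ := θ) h
    (A := 4 * B) (m := 1)
    (fun s hs => ((S.pell hs).1.add (S.pell h).1).neg)
    (fun s hs y => by
      have h1 := hellb s hs y
      have h2 := hellb θ h y
      have h3 := abs_add_le (ell ux uxx s y) (ell ux uxx θ y)
      rw [abs_neg]; linarith)
    (fun y => ((hcell y).add continuousAt_const).neg)
    (fun s hs => by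
      have a1 := S.ibp_ell hs ((S.pu hs).sub (S.pu h)) ((S.pux hs).sub (S.pux h))
        (fun y => (S.hx s y).sub (S.hx θ y))
      have a2 := S.ibp_ell h ((S.pu hs).sub (S.pu h)) ((S.pux hs).sub (S.pux h))
        (fun y => (S.hx s y).sub (S.hx θ y))
      have p1 := (S.pell hs).mul ((S.pu hs).sub (S.pu h))
      have p2 := (S.pell h).mul ((S.pu hs).sub (S.pu h))
      have e1 : (fun y => (u s y - u θ y) * -(ell ux uxx s y + ell ux uxx θ y)) =
          fun y => (-1) * (ell ux uxx s y * (u s y - u θ y) + ell ux uxx θ y * (u s y - u θ y)) := by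
        funext y; ring
      rw [e1, GI_cmul, GI_add p1 p2, a1, a2]
      have b1 := GI_add ((S.pux hs).mul ((S.pux hs).sub (S.pux h)))
        ((S.pux h).mul ((S.pux hs).sub (S.pux h)))
      unfold H
      rw [← GI_sub (S.pux hs).sq (S.pux h).sq]
      have e2 : (fun y => ux s y ^ 2 - ux θ y ^ 2) =
          fun y => ux s y * (ux s y - ux θ y) + ux θ y * (ux s y - ux θ y) := by
        funext y; ring
      rw [e2, b1]; ring)
  refine this.congr_deriv ?_
  have e2 : (fun y => ut θ y * -(ell ux uxx θ y + ell ux uxx θ y)) =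
      fun y => (-2) * (ell ux uxx θ y ^ 2) + (-2) * (G θ y * ell ux uxx θ y) := by
    funext y; rw [S.eqn]; unfold ell; ring
  rw [e2, GI_add ((S.pell h).sq.cmul _) (((S.pG h).mul (S.pell h)).cmul _), GI_cmul,
    GI_cmul]
  unfold H
  ring

lemma m0_deriv (S : OU u ux uxx ut G B C) {θ : ℝ} (h : 0 < θ) :
    HasDerivAt (fun s => GI (u s)) (GI (G θ)) θ := by
  have := S.deriv_lemma (F := fun s => GI (u s)) (k := fun s y => 1) (θ := θ) h (A := 1) (m := 0)
    (fun s hs => continuous_const) (fun s hs y => by simp) (fun y => continuousAt_const)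
    (fun s hs => by simp only [mul_one]; rw [← GI_sub (S.pu hs) (S.pu h)])
  refine this.congr_deriv ?_
  have e1 := S.ibp_ell h (PG.const 1) (PG.const 0) (fun y => hasDerivAt_const y 1)
  have e2 : (fun y => ut θ y * 1) = fun y => ell ux uxx θ y * 1 + G θ y := by
    funext y; rw [S.eqn]; unfold ell; ring
  rw [e2, GI_add ((S.pell h).mul (PG.const 1)) (S.pG h), e1]
  simp [GI]

lemma m1_deriv (S : OU u ux uxx ut G B C) {θ : ℝ} (h : 0 < θ) :
    HasDerivAt (fun s => GI (fun y => y * u s y))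
      (-(1 / 2) * GI (fun y => y * u θ y) + GI (fun y => y * G θ y)) θ := by
  have := S.deriv_lemma (F := fun s => GI (fun y => y * u s y)) (k := fun s y => y) (θ := θ) h
    (A := 1) (m := 1)
    (fun s hs => continuous_id) (fun s hs y => by
      rw [abs_le]; constructor <;> nlinarith [sq_nonneg (y - 1), sq_nonneg (y + 1)])
    (fun y => continuousAt_const)
    (fun s hs => by
      rw [← GI_sub (PG.id.mul (S.pu hs)) (PG.id.mul (S.pu h))]
      congr 1; funext y; ring)
  refine this.congr_deriv ?_
  have e1 := S.ibp_ell h PG.id (PG.const 1) (fun y => hasDerivAt_id y)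
  have e2 : (fun y => ut θ y * y) = fun y => ell ux uxx θ y * y + y * G θ y := by
    funext y; rw [S.eqn]; unfold ell; ring
  have e3 := GI_ibp (S.pu h) (S.pux h) (S.hx θ)
  have e4 : (fun y => ux θ y - y / 2 * u θ y) = fun y => ux θ y - (1 / 2) * (y * u θ y) := by
    funext y; ring
  rw [e4, GI_sub (S.pux h) ((PG.id.mul (S.pu h)).cmul _), GI_cmul] at e3
  rw [e2, GI_add ((S.pell h).mul PG.id) (PG.id.mul (S.pG h)), e1]
  simp only [mul_one]
  linarith

end OU

end

section

open MeasureTheory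


namespace OU

variable {u ux uxx ut G : ℝ → ℝ → ℝ} {B C : ℝ}

lemma H_nonneg (u : ℝ → ℝ → ℝ) (θ : ℝ) : 0 ≤ H u θ := GI_nonneg fun y => sq_nonneg _

lemma G_sq (S : OU u ux uxx ut G B C) {θ : ℝ} (h : 0 < θ) :
    H G θ ≤ 2 * C ^ 2 * Real.exp (-θ) * (H u θ + H ux θ) := by
  have hle : ∀ y, G θ y ^ 2 ≤ 2 * C ^ 2 * Real.exp (-θ) * (u θ y ^ 2 + ux θ y ^ 2) := by
    intro y
    have h1 := S.hG θ h y
    have hC := S.hC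
    have h2 : (C * Real.exp (-θ / 2) * (|u θ y| + |ux θ y|)) ^ 2 =
        C ^ 2 * Real.exp (-θ) * (|u θ y| + |ux θ y|) ^ 2 := by
      have : Real.exp (-θ) = Real.exp (-θ / 2) ^ 2 := by
        rw [pow_two, ← Real.exp_add]; congr 1; ring
      rw [this]; ring
    have h3 : G θ y ^ 2 ≤ (C * Real.exp (-θ / 2) * (|u θ y| + |ux θ y|)) ^ 2 := by
      rw [← sq_abs]
      exact pow_le_pow_left₀ (abs_nonneg _) h1 2
    rw [h2] at h3
    have h4 : (|u θ y| + |ux θ y|) ^ 2 ≤ 2 * (u θ y ^ 2 + ux θ y ^ 2) := by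
      rw [← sq_abs (u θ y), ← sq_abs (ux θ y)]
      nlinarith [sq_nonneg (|u θ y| - |ux θ y|)]
    have h5 : 0 ≤ C ^ 2 * Real.exp (-θ) := by positivity
    have := mul_le_mul_of_nonneg_left h4 h5
    linarith
  have := GI_mono (S.pG h).sq (((S.pu h).sq.add (S.pux h).sq).cmul _) hle
  rw [GI_cmul, GI_add (S.pu h).sq (S.pux h).sq] at this
  exact this

lemma freq (S : OU u ux uxx ut G B C) : ∃ M, 0 ≤ M ∧ ∀ θ, 1 ≤ θ → H ux θ ≤ M * H u θ := by
  set F : ℝ → ℝ := fun θ => (1 + H ux θ / H u θ) * Real.exp (C ^ 2 * Real.exp (-θ)) with hF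
  set F' : ℝ → ℝ := fun θ =>
    ((-2 * H (ell ux uxx) θ - 2 * GI (fun y => G θ y * ell ux uxx θ y)) * H u θ -
      H ux θ * (-2 * H ux θ + 2 * GI (fun y => G θ y * u θ y))) / H u θ ^ 2 *
      Real.exp (C ^ 2 * Real.exp (-θ)) +
    (1 + H ux θ / H u θ) * (Real.exp (C ^ 2 * Real.exp (-θ)) * (C ^ 2 * (Real.exp (-θ) * (-1))))
    with hF'
  have hder : ∀ θ > 0, HasDerivAt F (F' θ) θ := by
    intro θ h
    have h1 := ((S.D_deriv h).fun_div (S.H_deriv h) (S.H_pos h).ne').const_add 1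
    have h2 : HasDerivAt (fun θ => Real.exp (C ^ 2 * Real.exp (-θ)))
      (Real.exp (C ^ 2 * Real.exp (-θ)) * (C ^ 2 * (Real.exp (-θ) * (-1)))) θ :=
      (((hasDerivAt_neg θ).exp).const_mul (C ^ 2)).exp
    exact h1.mul h2
  have hneg : ∀ θ > 0, F' θ ≤ 0 := by
    intro θ h
    have hpos := S.H_pos h
    set hh : ℝ := H u θ with hhh
    set d : ℝ := H ux θ with hd
    set q : ℝ := H (ell ux uxx) θ with hq
    set b : ℝ := GI (fun y => G θ y * ell ux uxx θ y) with hb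
    set a : ℝ := GI (fun y => G θ y * u θ y) with ha
    have hG2 := S.G_sq h
    have elu : GI (fun y => ell ux uxx θ y * u θ y) = -d := by
      rw [S.ibp_ell h (S.pu h) (S.pux h) (S.hx θ), hd]
      unfold H; simp only [pow_two]
    -- positivity of a square
    have hsq : 0 ≤ GI (fun y => (hh * ell ux uxx θ y + d * u θ y + hh / 2 * G θ y) ^ 2) :=
      GI_nonneg fun y => sq_nonneg _
    have hexp : (fun y => (hh * ell ux uxx θ y + d * u θ y + hh / 2 * G θ y) ^ 2) =
        fun y => hh ^ 2 * ell ux uxx θ y ^ 2 + d ^ 2 * u θ y ^ 2 + (hh ^ 2 / 4) * G θ y ^ 2 +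
          (2 * hh * d) * (ell ux uxx θ y * u θ y) + hh ^ 2 * (G θ y * ell ux uxx θ y) +
          (d * hh) * (G θ y * u θ y) := by
      funext y; ring
    have p1 := ((S.pell h).sq.cmul (hh ^ 2))
    have p2 := p1.add ((S.pu h).sq.cmul (d ^ 2))
    have p3 := p2.add ((S.pG h).sq.cmul (hh ^ 2 / 4))
    have p4 := p3.add (((S.pell h).mul (S.pu h)).cmul (2 * hh * d))
    have p5 := p4.add (((S.pG h).mul (S.pell h)).cmul (hh ^ 2))
    rw [hexp, GI_add p5 (((S.pG h).mul (S.pu h)).cmul _),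
      GI_add p4 (((S.pG h).mul (S.pell h)).cmul _),
      GI_add p3 (((S.pell h).mul (S.pu h)).cmul _),
      GI_add p2 ((S.pG h).sq.cmul _), GI_add p1 ((S.pu h).sq.cmul _),
      GI_cmul, GI_cmul, GI_cmul, GI_cmul, GI_cmul, GI_cmul, elu, ← hb, ← ha] at hsq
    have hsq' : 0 ≤ hh ^ 2 * q + d ^ 2 * hh + hh ^ 2 / 4 * H G θ + 2 * hh * d * (-d) +
        hh ^ 2 * b + d * hh * a := hsq
    have hsq2 : 0 ≤ hh * q - d ^ 2 + hh / 4 * H G θ + hh * b + d * a := by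
      have : 0 ≤ hh * (hh * q - d ^ 2 + hh / 4 * H G θ + hh * b + d * a) := by
        calc _ ≤ _ := hsq'
          _ = _ := by ring
      exact nonneg_of_mul_nonneg_right this hpos
    have hnum : (-2 * q - 2 * b) * hh - d * (-2 * d + 2 * a) ≤
        hh ^ 2 * (C ^ 2 * Real.exp (-θ) * (1 + d / hh)) := by
      have e1 : hh ^ 2 * (C ^ 2 * Real.exp (-θ) * (1 + d / hh)) =
          hh * (C ^ 2 * Real.exp (-θ) * (hh + d)) := by field_simp
      rw [e1]
      have := mul_le_mul_of_nonneg_left hG2 hpos.le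
      nlinarith
    have hdiv : ((-2 * q - 2 * b) * hh - d * (-2 * d + 2 * a)) / hh ^ 2 ≤
        C ^ 2 * Real.exp (-θ) * (1 + d / hh) := by
      rw [div_le_iff₀ (by positivity)]; linarith
    have hE : 0 < Real.exp (C ^ 2 * Real.exp (-θ)) := Real.exp_pos _
    have := mul_le_mul_of_nonneg_right hdiv hE.le
    simp only [hF', ← hhh, ← hd, ← hq, ← hb, ← ha]
    linarith
  have hanti : AntitoneOn F (Ici 1) := by
    refine antitoneOn_of_deriv_nonpos (convex_Ici 1) ?_ ?_ ?_
    · exact fun θ hθ => (hder θ (lt_of_lt_of_le one_pos hθ)).continuousAt.continuousWithinAt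
    · intro θ hθ
      rw [interior_Ici] at hθ
      exact (hder θ (one_pos.trans hθ)).differentiableAt.differentiableWithinAt
    · intro θ hθ
      rw [interior_Ici] at hθ
      rw [(hder θ (one_pos.trans hθ)).deriv]
      exact hneg θ (one_pos.trans hθ)
  refine ⟨F 1, ?_, fun θ hθ => ?_⟩
  · have := H_nonneg ux 1
    have := H_nonneg u 1
    simp only [hF]; positivity
  · have h1 := hanti (mem_Ici.2 le_rfl) hθ hθ
    have hpos := S.H_pos (lt_of_lt_of_le one_pos hθ)
    have h2 : 1 ≤ Real.exp (C ^ 2 * Real.exp (-θ)) := Real.one_le_exp (by positivity)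
    have h3 : 0 ≤ H ux θ / H u θ := div_nonneg (H_nonneg _ _) hpos.le
    have h4 : H ux θ / H u θ ≤ F 1 := by
      refine le_trans ?_ h1
      simp only [hF]
      nlinarith
    rwa [div_le_iff₀ hpos] at h4

lemma exp_decay_bound {g g' : ℝ → ℝ} {θ K c : ℝ} (hc : 0 < c)
    (hd : ∀ s ≥ θ, HasDerivAt g (g' s) s) (hb : ∀ s ≥ θ, |g' s| ≤ K * Real.exp (-c * s))
    (hl : Filter.Tendsto g Filter.atTop (nhds 0)) : |g θ| ≤ K / c * Real.exp (-c * θ) := by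
  have hexp : ∀ s, HasDerivAt (fun s => K / c * Real.exp (-c * s))
      (-(K * Real.exp (-c * s))) s := by
    intro s
    have : HasDerivAt (fun s => K / c * Real.exp (-c * s))
      (K / c * (Real.exp (-c * s) * (-c * 1))) s :=
      (((hasDerivAt_id s).const_mul (-c)).exp).const_mul (K / c)
    refine this.congr_deriv ?_
    field_simp
  have hlim : Filter.Tendsto (fun s => K / c * Real.exp (-c * s)) Filter.atTop (nhds 0) := by
    have h1 : Filter.Tendsto (fun s : ℝ => -c * s) Filter.atTop Filter.atBot :=
      Filter.tendsto_id.const_mul_atTop_of_neg (by linarith)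
    have := (Real.tendsto_exp_atBot.comp h1).const_mul (K / c)
    simpa using this
  have main : ∀ g g' : ℝ → ℝ, (∀ s ≥ θ, HasDerivAt g (g' s) s) →
      (∀ s ≥ θ, |g' s| ≤ K * Real.exp (-c * s)) → Filter.Tendsto g Filter.atTop (nhds 0) →
      g θ ≤ K / c * Real.exp (-c * θ) := by
    intro g g' hd hb hl
    have hm : MonotoneOn (fun s => g s - K / c * Real.exp (-c * s)) (Ici θ) := by
      refine monotoneOn_of_deriv_nonneg (convex_Ici θ) ?_ ?_ ?_
      · exact fun s hs => ((hd s hs).sub (hexp s)).continuousAt.continuousWithinAt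
      · intro s hs
        rw [interior_Ici] at hs
        exact ((hd s (le_of_lt hs)).sub (hexp s)).differentiableAt.differentiableWithinAt
      · intro s hs
        rw [interior_Ici] at hs
        have hs' : s ≥ θ := le_of_lt hs
        have := ((hd s hs').sub (hexp s)).deriv
        have e : deriv (fun s => g s - K / c * Real.exp (-c * s)) s =
          g' s - -(K * Real.exp (-c * s)) := this
        rw [e]
        linarith [(abs_le.1 (hb s hs')).1]
    have hl2 := hl.sub hlim
    rw [sub_zero] at hl2
    have : g θ - K / c * Real.exp (-c * θ) ≤ 0 := by
      refine ge_of_tendsto hl2 ?_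
      filter_upwards [Filter.eventually_ge_atTop θ] with s hs
      exact hm (mem_Ici.2 le_rfl) hs hs
    linarith
  rw [abs_le]
  constructor
  · have := main (fun s => - g s) (fun s => - g' s) (fun s hs => (hd s hs).neg)
      (fun s hs => by rw [abs_neg]; exact hb s hs) (by simpa using hl.neg)
    linarith
  · exact main g g' hd hb hl

lemma H_decay (S : OU u ux uxx ut G B C) : ∃ A0, 0 ≤ A0 ∧ ∀ θ > 0, H u θ ≤ A0 * Real.exp (-θ) ^ 2 := by
  refine ⟨GI (fun y => B ^ 2 * (1 + y ^ 2) ^ 2), GI_nonneg fun y => by positivity, fun θ h => ?_⟩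
  rw [mul_comm, ← GI_cmul]
  refine GI_mono (S.pu h).sq ((PG.poly _ _).cmul _) fun y => ?_
  have := S.dz θ h y
  rw [← sq_abs]
  calc _ ≤ (B * Real.exp (-θ) * (1 + y ^ 2)) ^ 2 := pow_le_pow_left₀ (abs_nonneg _) this 2
    _ = _ := by ring

lemma good_time (S : OU u ux uxx ut G B C) (Θ : ℝ) (hΘ : 0 < Θ) : ∃ θ ≥ Θ, ∀ s ≥ θ,
    Real.exp s * H u s ≤ Real.exp θ * H u θ := by
  obtain ⟨A0, hA0, hdec⟩ := S.H_decay
  set r : ℝ → ℝ := fun s => Real.exp s * H u s with hr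
  have hrΘ : 0 < r Θ := mul_pos (Real.exp_pos _) (S.H_pos hΘ)
  have hrle : ∀ s > 0, r s ≤ A0 * Real.exp (-s) := by
    intro s hs
    have := mul_le_mul_of_nonneg_left (hdec s hs) (Real.exp_pos s).le
    have e : Real.exp s * Real.exp (-s) = 1 := by rw [← Real.exp_add]; simp
    calc _ ≤ _ := this
      _ = (Real.exp s * Real.exp (-s)) * (A0 * Real.exp (-s)) := by ring
      _ = _ := by rw [e, one_mul]
  have hlim : Filter.Tendsto (fun s => A0 * Real.exp (-s)) Filter.atTop (nhds 0) := by
    have := (Real.tendsto_exp_neg_atTop_nhds_zero).const_mul A0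
    simpa using this
  obtain ⟨T, hT⟩ := Filter.eventually_atTop.1 (hlim.eventually (gt_mem_nhds hrΘ))
  have hcont : ContinuousOn r (Icc Θ (max Θ T)) := fun s hs =>
    (Real.continuous_exp.continuousAt.mul
      (S.H_deriv (lt_of_lt_of_le hΘ hs.1)).continuousAt).continuousWithinAt
  obtain ⟨θ, hθ, hmax⟩ := isCompact_Icc.exists_isMaxOn (nonempty_Icc.2 (le_max_left Θ T)) hcont
  refine ⟨θ, hθ.1, fun s hs => ?_⟩
  rcases le_total s (max Θ T) with h1 | h1
  · exact hmax ⟨hθ.1.trans hs, h1⟩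
  · have h2 := hT s ((le_max_right _ _).trans h1)
    have h3 := hrle s (hΘ.trans_le (hθ.1.trans hs))
    have h4 : r Θ ≤ r θ := hmax ⟨le_rfl, le_max_left _ _⟩
    exact h3.trans (h2.le.trans h4)

lemma G_moment (S : OU u ux uxx ut G B C) {θ M : ℝ} (h : 0 < θ) (hM0 : 0 ≤ M)
    (hM : H ux θ ≤ M * H u θ)
    {g : ℝ → ℝ} (hg : PG g) :
    |GI (fun y => g y * G θ y)| ≤
      C * √(GI (fun y => g y ^ 2)) * (1 + √M) * (Real.exp (-θ / 2) * √(H u θ)) := by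
  have hC := S.hC
  have h1 : ∀ y, |g y * G θ y| ≤ C * Real.exp (-θ / 2) * (|g y| * |u θ y| + |g y| * |ux θ y|) := by
    intro y
    rw [abs_mul]
    calc _ ≤ |g y| * (C * Real.exp (-θ / 2) * (|u θ y| + |ux θ y|)) :=
          mul_le_mul_of_nonneg_left (S.hG θ h y) (abs_nonneg _)
      _ = _ := by ring
  have p1 := hg.abs.mul (S.pu h).abs
  have p2 := hg.abs.mul (S.pux h).abs
  have h2 := GI_mono (hg.mul (S.pG h)).abs ((p1.add p2).cmul (C * Real.exp (-θ / 2))) h1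
  rw [GI_cmul, GI_add p1 p2] at h2
  have c1 := GI_cs' hg (S.pu h)
  have c2 := GI_cs' hg (S.pux h)
  have c3 : √(H ux θ) ≤ √M * √(H u θ) := by
    rw [← Real.sqrt_mul hM0]; exact Real.sqrt_le_sqrt hM
  have c4 : GI (fun y => |g y| * |ux θ y|) ≤ √(GI (fun y => g y ^ 2)) * (√M * √(H u θ)) :=
    c2.trans (mul_le_mul_of_nonneg_left c3 (Real.sqrt_nonneg _))
  refine GI_abs.trans (h2.trans ?_)
  calc _ ≤ C * Real.exp (-θ / 2) * (√(GI (fun y => g y ^ 2)) * √(H u θ) +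
        √(GI (fun y => g y ^ 2)) * (√M * √(H u θ))) :=
        mul_le_mul_of_nonneg_left (add_le_add c1 c4) (by positivity)
    _ = _ := by ring

lemma moment_le (S : OU u ux uxx ut G B C) {θ : ℝ} (h : 0 < θ) {g : ℝ → ℝ} (hg : PG g) :
    |GI (fun y => g y * u θ y)| ≤ √(GI (fun y => g y ^ 2)) * √(H u θ) := by
  refine GI_abs.trans ?_
  have := GI_cs' hg (S.pu h)
  simp only [abs_mul]; exact this

lemma main (S : OU u ux uxx ut G B C) : ∃ K > 0, ∀ Θ, ∃ θ ≥ Θ, ∃ a b c, -K ≤ a ∧ a < b ∧ b < c ∧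
    c ≤ K ∧ u θ a * u θ b < 0 ∧ u θ b * u θ c < 0 := by
  obtain ⟨M, hM0, hM⟩ := S.freq
  obtain ⟨K, hK, η, hη, hsign⟩ := sign_lemma M hM0
  obtain ⟨A0, hA0, hdec⟩ := S.H_decay
  have hC := S.hC
  have hsqrt : ∀ s > 0, √(H u s) ≤ √A0 * Real.exp (-s) := by
    intro s hs
    have := Real.sqrt_le_sqrt (hdec s hs)
    rwa [Real.sqrt_mul hA0, Real.sqrt_sq (Real.exp_pos _).le] at this
  set C0 : ℝ := C * √(GI (fun _ => (1 : ℝ) ^ 2)) * (1 + √M) with hC0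
  set C1 : ℝ := C * √(GI (fun y => y ^ 2)) * (1 + √M) with hC1
  have hC0n : 0 ≤ C0 := by positivity
  have hC1n : 0 ≤ C1 := by positivity
  have hlim : Filter.Tendsto (fun s : ℝ => (C0 + 2 * C1) * Real.exp (-(1 / 2) * s)) Filter.atTop
      (nhds 0) := by
    have h1 : Filter.Tendsto (fun s : ℝ => -(1 / 2) * s) Filter.atTop Filter.atBot :=
      Filter.tendsto_id.const_mul_atTop_of_neg (by norm_num)
    have := (Real.tendsto_exp_atBot.comp h1).const_mul (C0 + 2 * C1)
    simpa using this
  obtain ⟨T, hT⟩ := Filter.eventually_atTop.1 (hlim.eventually (gt_mem_nhds hη))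
  have hexp0 : Filter.Tendsto (fun s : ℝ => Real.exp (-s)) Filter.atTop (nhds 0) :=
    Real.tendsto_exp_neg_atTop_nhds_zero
  have hexp1 : Filter.Tendsto (fun s : ℝ => Real.exp (-(1 / 2) * s)) Filter.atTop (nhds 0) :=
    Real.tendsto_exp_atBot.comp (Filter.tendsto_id.const_mul_atTop_of_neg (by norm_num))
  refine ⟨K, hK, fun Θ => ?_⟩
  obtain ⟨θ, hθ, hgood⟩ := S.good_time (max 1 (max Θ T)) (by positivity)
  have hθ1 : 1 ≤ θ := (le_max_left _ _).trans hθ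
  have hθΘ : Θ ≤ θ := (le_max_left _ _).trans ((le_max_right _ _).trans hθ)
  have hθT : T ≤ θ := (le_max_right _ _).trans ((le_max_right _ _).trans hθ)
  have hθ0 : 0 < θ := by linarith
  refine ⟨θ, hθΘ, ?_⟩
  have hgs : ∀ s ≥ θ, √(H u s) ≤ Real.exp (θ / 2) * √(H u θ) * Real.exp (-(1 / 2) * s) := by
    intro s hs
    have h1 := hgood s hs
    have h2 : H u s ≤ (Real.exp (θ / 2) * Real.exp (-(1 / 2) * s)) ^ 2 * H u θ := by
      have e1 : (Real.exp (θ / 2) * Real.exp (-(1 / 2) * s)) ^ 2 = Real.exp (-s) * Real.exp θ := by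
        rw [← Real.exp_add, ← Real.exp_add, pow_two, ← Real.exp_add]; congr 1; ring
      rw [e1, mul_assoc]
      calc H u s = Real.exp (-s) * (Real.exp s * H u s) := by
            rw [← mul_assoc, ← Real.exp_add]; simp
        _ ≤ _ := mul_le_mul_of_nonneg_left h1 (Real.exp_pos _).le
    have := Real.sqrt_le_sqrt h2
    rw [Real.sqrt_mul (sq_nonneg _), Real.sqrt_sq (by positivity)] at this
    calc _ ≤ _ := this
      _ = _ := by ring
  have hsmall := hT θ hθT
  have hsq0 := Real.sqrt_nonneg (H u θ)
  have hE := Real.exp_pos (-(1 / 2) * θ)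
  refine hsign (u θ) (ux θ) (S.pu hθ0) (S.pux hθ0) (S.hx θ) (S.H_pos hθ0) (hM θ hθ1) ?_ ?_
  · have hb := exp_decay_bound (g := fun s => GI (u s)) (g' := fun s => GI (G s)) (θ := θ)
      (K := C0 * (Real.exp (θ / 2) * √(H u θ))) (c := 1) one_pos
      (fun s hs => S.m0_deriv (by linarith))
      (fun s hs => by
        have hs0 : 0 < s := by linarith
        have h1 := S.G_moment hs0 hM0 (hM s (by linarith)) (PG.const 1)
        simp only [one_mul] at h1
        refine h1.trans ?_
        have h2 := hgs s hs
        calc _ ≤ C0 * (Real.exp (-s / 2) *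
              (Real.exp (θ / 2) * √(H u θ) * Real.exp (-(1 / 2) * s))) := by gcongr
          _ = C0 * (Real.exp (θ / 2) * √(H u θ)) *
              (Real.exp (-s / 2) * Real.exp (-(1 / 2) * s)) := by ring
          _ = _ := by
              rw [← Real.exp_add]; congr 2; ring)
      (by
        have hz := (hexp0.const_mul (√(GI (fun _ => (1 : ℝ) ^ 2)) * √A0))
        rw [mul_zero] at hz
        refine squeeze_zero_norm' ?_ hz
        filter_upwards [Filter.eventually_gt_atTop 0] with s hs
        have h1 := S.moment_le hs (PG.const 1)
        simp only [one_mul] at h1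
        rw [Real.norm_eq_abs]
        refine h1.trans ?_
        rw [mul_assoc]
        exact mul_le_mul_of_nonneg_left (hsqrt s hs) (Real.sqrt_nonneg _))
    refine hb.trans ?_
    have e : C0 * (Real.exp (θ / 2) * √(H u θ)) / 1 * Real.exp (-1 * θ) =
        C0 * Real.exp (-(1 / 2) * θ) * √(H u θ) := by
      have : Real.exp (-(1 / 2) * θ) = Real.exp (θ / 2) * Real.exp (-1 * θ) := by
        rw [← Real.exp_add]; congr 1; ring
      rw [this]; ring
    rw [e]
    refine mul_le_mul_of_nonneg_right ?_ hsq0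
    nlinarith
  · have hb := exp_decay_bound (g := fun s => Real.exp (s / 2) * GI (fun y => y * u s y))
      (g' := fun s => Real.exp (s / 2) * GI (fun y => y * G s y)) (θ := θ)
      (K := C1 * (Real.exp (θ / 2) * √(H u θ))) (c := 1 / 2) (by norm_num)
      (fun s hs => by
        have h1 : HasDerivAt (fun s : ℝ => Real.exp (s / 2)) (Real.exp (s / 2) * (1 / 2)) s :=
          ((hasDerivAt_id s).div_const 2).exp
        refine (h1.mul (S.m1_deriv (by linarith))).congr_deriv ?_
        ring)
      (fun s hs => by
        have hs0 : 0 < s := by linarith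
        have h1 := S.G_moment hs0 hM0 (hM s (by linarith)) PG.id
        have h2 := hgs s hs
        rw [abs_mul, abs_of_pos (Real.exp_pos _)]
        have h3 : Real.exp (s / 2) * Real.exp (-s / 2) = 1 := by
          rw [← Real.exp_add]; simp; ring
        calc _ ≤ Real.exp (s / 2) * (C1 * (Real.exp (-s / 2) * √(H u s))) :=
              mul_le_mul_of_nonneg_left h1 (Real.exp_pos _).le
          _ = (Real.exp (s / 2) * Real.exp (-s / 2)) * (C1 * √(H u s)) := by ring
          _ = C1 * √(H u s) := by rw [h3, one_mul]
          _ ≤ C1 * (Real.exp (θ / 2) * √(H u θ) * Real.exp (-(1 / 2) * s)) := by gcongr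
          _ = _ := by ring)
      (by
        have hz := (hexp1.const_mul (√(GI (fun y => y ^ 2)) * √A0))
        rw [mul_zero] at hz
        refine squeeze_zero_norm' ?_ hz
        filter_upwards [Filter.eventually_gt_atTop 0] with s hs
        have h1 := S.moment_le hs PG.id
        rw [Real.norm_eq_abs, abs_mul, abs_of_pos (Real.exp_pos _)]
        have h4 : Real.exp (-(1 / 2) * s) = Real.exp (s / 2) * Real.exp (-s) := by
          rw [← Real.exp_add]; congr 1; ring
        calc _ ≤ Real.exp (s / 2) * (√(GI (fun y => y ^ 2)) * (√A0 * Real.exp (-s))) :=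
              mul_le_mul_of_nonneg_left
                (h1.trans (mul_le_mul_of_nonneg_left (hsqrt s hs) (Real.sqrt_nonneg _)))
                (Real.exp_pos _).le
          _ = _ := by rw [h4]; ring)
    rw [abs_mul, abs_of_pos (Real.exp_pos _)] at hb
    have h5 : Real.exp (-(1 / 2) * θ) * Real.exp (θ / 2) = 1 := by
      rw [← Real.exp_add]; simp; ring
    have h6 := mul_le_mul_of_nonneg_left hb hE.le
    have h7 : Real.exp (-(1 / 2) * θ) * (Real.exp (θ / 2) * |GI (fun y => y * u θ y)|) =
        |GI (fun y => y * u θ y)| := by rw [← mul_assoc, h5, one_mul]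
    have h8 : Real.exp (-(1 / 2) * θ) * (C1 * (Real.exp (θ / 2) * √(H u θ)) / (1 / 2) *
        Real.exp (-(1 / 2) * θ)) = 2 * C1 * Real.exp (-(1 / 2) * θ) * √(H u θ) *
        (Real.exp (-(1 / 2) * θ) * Real.exp (θ / 2)) := by ring
    rw [h7, h8, h5, mul_one] at h6
    refine h6.trans (mul_le_mul_of_nonneg_right ?_ hsq0)
    nlinarith

end OU

end

section

open MeasureTheory


namespace ZSol

variable {v vt vx vxx : ℝ → ℝ → ℝ} {B C : ℝ}

lemma joint (S : ZSol v vt vx vxx B C) (t x : ℝ) :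
    HasFDerivAt (fun p : ℝ × ℝ => v p.1 p.2)
      ((ContinuousLinearMap.toSpanSingleton ℝ (vt t x)).coprod
        (ContinuousLinearMap.toSpanSingleton ℝ (vx t x))) (t, x) := by
  have h := hasStrictFDerivAt_uncurry_coprod (𝕜 := ℝ) (u := (t, x)) (f := v)
    (f₁ := fun t x => ContinuousLinearMap.toSpanSingleton ℝ (vt t x))
    (f₂ := fun t x => ContinuousLinearMap.toSpanSingleton ℝ (vx t x))
    (Filter.Eventually.of_forall fun p => (S.ht p.1 p.2).hasFDerivAt)
    (Filter.Eventually.of_forall fun p => (S.hx p.1 p.2).hasFDerivAt)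
    (by
      have : Continuous (fun p : ℝ × ℝ => ContinuousLinearMap.toSpanSingleton ℝ (vt p.1 p.2)) :=
        (ContinuousLinearMap.toSpanSingletonCLE (𝕜 := ℝ) (E := ℝ)).continuous.comp S.cvt
      exact this.continuousAt)
    (by
      have : Continuous (fun p : ℝ × ℝ => ContinuousLinearMap.toSpanSingleton ℝ (vx p.1 p.2)) :=
        (ContinuousLinearMap.toSpanSingletonCLE (𝕜 := ℝ) (E := ℝ)).continuous.comp S.cvx
      exact this.continuousAt)
  exact h.hasFDerivAt

lemma chain (S : ZSol v vt vx vxx B C) {a b : ℝ → ℝ} {a' b' θ : ℝ} (ha : HasDerivAt a a' θ)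
    (hb : HasDerivAt b b' θ) :
    HasDerivAt (fun s => v (a s) (b s)) (a' * vt (a θ) (b θ) + b' * vx (a θ) (b θ)) θ := by
  have h := (S.joint (a θ) (b θ)).comp_hasDerivAt θ (ha.prodMk hb)
  exact h.congr_deriv (by simp)

lemma hB (S : ZSol v vt vx vxx B C) : 0 ≤ B := (abs_nonneg _).trans (S.bv 0 0)

lemma lipt (S : ZSol v vt vx vxx B C) (t s x : ℝ) : |v s x - v t x| ≤ B * |s - t| := by
  have := Convex.norm_image_sub_le_of_norm_hasDerivWithin_le (f := fun s => v s x)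
    (fun s _ => (S.ht s x).hasDerivWithinAt) (fun s _ => S.bvt s x) convex_univ
    (mem_univ t) (mem_univ s)
  simpa using this

lemma lipxx (S : ZSol v vt vx vxx B C) (t x y : ℝ) : |vx t y - vx t x| ≤ B * |y - x| := by
  have := Convex.norm_image_sub_le_of_norm_hasDerivWithin_le (f := fun y => vx t y)
    (fun s _ => (S.hxx t s).hasDerivWithinAt) (fun s _ => S.bvxx t s) convex_univ
    (mem_univ x) (mem_univ y)
  simpa using this

lemma quad (S : ZSol v vt vx vxx B C) {t x0 : ℝ} (h0 : v t x0 = 0) (h1 : vx t x0 = 0) (x : ℝ) :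
    |v t x| ≤ B * (x - x0) ^ 2 := by
  have := Convex.norm_image_sub_le_of_norm_hasDerivWithin_le (f := fun y => v t y)
    (s := Metric.closedBall x0 |x - x0|) (C := B * |x - x0|) (x := x0) (y := x)
    (fun s _ => (S.hx t s).hasDerivWithinAt) (fun s hs => by
      have := S.lipxx t x0 s
      rw [h1, sub_zero] at this
      rw [Metric.mem_closedBall, Real.dist_eq] at hs
      exact this.trans (mul_le_mul_of_nonneg_left hs S.hB)) (convex_closedBall _ _)
    (Metric.mem_closedBall_self (abs_nonneg _)) (by rw [Metric.mem_closedBall, Real.dist_eq])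
  rw [h0, sub_zero, Real.norm_eq_abs, Real.norm_eq_abs, mul_assoc, abs_mul_abs_self] at this
  rw [pow_two]; exact this

lemma toOU (S : ZSol v vt vx vxx B C) {t0 x0 : ℝ} (h0 : v t0 x0 = 0) (h1 : vx t0 x0 = 0)
    (hnz : ∀ t, ∃ x, v t x ≠ 0) :
    OU (fun θ y => v (t0 - Real.exp (-θ)) (x0 + Real.exp (-θ / 2) * y))
      (fun θ y => Real.exp (-θ / 2) * vx (t0 - Real.exp (-θ)) (x0 + Real.exp (-θ / 2) * y))
      (fun θ y => Real.exp (-θ) * vxx (t0 - Real.exp (-θ)) (x0 + Real.exp (-θ / 2) * y))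
      (fun θ y => Real.exp (-θ) * vt (t0 - Real.exp (-θ)) (x0 + Real.exp (-θ / 2) * y)
        + (-(1 / 2) * Real.exp (-θ / 2) * y) *
          vx (t0 - Real.exp (-θ)) (x0 + Real.exp (-θ / 2) * y))
      (fun θ y => Real.exp (-θ) * (vt (t0 - Real.exp (-θ)) (x0 + Real.exp (-θ / 2) * y)
        - vxx (t0 - Real.exp (-θ)) (x0 + Real.exp (-θ / 2) * y))) (2 * B) C := by
  have hB := S.hB
  have hc : Continuous (fun p : ℝ × ℝ => (t0 - Real.exp (-p.1), x0 + Real.exp (-p.1 / 2) * p.2)) := by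
    fun_prop
  have cv := S.cv.comp hc
  have cvt := S.cvt.comp hc
  have cvx := S.cvx.comp hc
  have cvxx := S.cvxx.comp hc
  have hsq : ∀ θ : ℝ, Real.exp (-θ) = Real.exp (-θ / 2) * Real.exp (-θ / 2) := fun θ => by
    rw [← Real.exp_add]; ring_nf
  have e1 : ∀ θ > (0:ℝ), Real.exp (-θ) ≤ 1 := fun θ h => Real.exp_le_one_iff.2 (by linarith)
  have e2 : ∀ θ > (0:ℝ), Real.exp (-θ / 2) ≤ 1 := fun θ h => Real.exp_le_one_iff.2 (by linarith)
  have hin : ∀ θ y : ℝ, HasDerivAt (fun y => x0 + Real.exp (-θ / 2) * y) (Real.exp (-θ / 2)) y := by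
    intro θ y
    simpa using ((hasDerivAt_id y).const_mul (Real.exp (-θ / 2))).const_add x0
  refine ⟨?_, ?_, ?_, cv, ?_, ?_, ?_, by positivity, S.hC, ?_, ?_, ?_, ?_, ?_, ?_, ?_, ?_⟩
  · intro θ y
    have := (S.hx (t0 - Real.exp (-θ)) (x0 + Real.exp (-θ / 2) * y)).comp y (hin θ y)
    rw [mul_comm] at this; exact this
  · intro θ y
    have := ((S.hxx (t0 - Real.exp (-θ)) (x0 + Real.exp (-θ / 2) * y)).comp y (hin θ y)).const_mul
      (Real.exp (-θ / 2))
    refine this.congr_deriv ?_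
    rw [hsq θ]; ring
  · intro θ y
    refine S.chain ?_ ?_
    · have := ((Real.hasDerivAt_exp (-θ)).comp θ (hasDerivAt_neg θ)).const_sub t0
      refine this.congr_deriv (by ring)
    · have h2 : HasDerivAt (fun θ : ℝ => -θ / 2) (-1 / 2) θ := (hasDerivAt_neg θ).div_const 2
      have := (((Real.hasDerivAt_exp (-θ / 2)).comp θ h2).mul_const y).const_add x0
      refine this.congr_deriv (by ring)
  · exact ((by fun_prop : Continuous fun p : ℝ × ℝ => Real.exp (-p.1)).mul cvt).add
      ((by fun_prop : Continuous fun p : ℝ × ℝ => -(1 / 2) * Real.exp (-p.1 / 2) * p.2).mul cvx)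
  · exact (by fun_prop : Continuous fun p : ℝ × ℝ => Real.exp (-p.1 / 2)).mul cvx
  · exact (by fun_prop : Continuous fun p : ℝ × ℝ => Real.exp (-p.1)).mul cvxx
  · intro θ h y
    exact (S.bv _ _).trans (by linarith)
  · intro θ h y
    rw [abs_mul, abs_of_pos (Real.exp_pos _)]
    have := mul_le_mul (e2 θ h) (S.bvx (t0 - Real.exp (-θ)) (x0 + Real.exp (-θ / 2) * y))
      (abs_nonneg _) zero_le_one
    linarith
  · intro θ h y
    rw [abs_mul, abs_of_pos (Real.exp_pos _)]
    have := mul_le_mul (e1 θ h) (S.bvxx (t0 - Real.exp (-θ)) (x0 + Real.exp (-θ / 2) * y))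
      (abs_nonneg _) zero_le_one
    linarith
  · intro θ h y
    refine (abs_add_le _ _).trans ?_
    rw [abs_mul, abs_mul, abs_mul, abs_mul, abs_of_pos (Real.exp_pos _), abs_of_pos (Real.exp_pos _)]
    have k1 := mul_le_mul (e1 θ h) (S.bvt (t0 - Real.exp (-θ)) (x0 + Real.exp (-θ / 2) * y))
      (abs_nonneg _) zero_le_one
    have k2 := mul_le_mul (e2 θ h) (S.bvx (t0 - Real.exp (-θ)) (x0 + Real.exp (-θ / 2) * y))
      (abs_nonneg _) zero_le_one
    have k3 : |(-(1/2) : ℝ)| = 1 / 2 := by norm_num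
    rw [k3]
    have k4 := mul_le_mul_of_nonneg_left k2 (abs_nonneg y)
    have k5 : |y| ≤ 1 + y ^ 2 := by
      rw [← sq_abs y]; nlinarith [sq_nonneg (|y| - 1), abs_nonneg y]
    have k6 := mul_le_mul_of_nonneg_right k5 hB
    nlinarith [sq_nonneg y, mul_nonneg hB (sq_nonneg y)]
  · intro θ y
    ring
  · intro θ h y
    rw [abs_mul, abs_mul, abs_of_pos (Real.exp_pos _), abs_of_pos (Real.exp_pos _)]
    have k1 := S.eqn (t0 - Real.exp (-θ)) (x0 + Real.exp (-θ / 2) * y)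
    have k2 := mul_le_mul_of_nonneg_left k1 (Real.exp_pos (-θ)).le
    refine k2.trans ?_
    rw [hsq θ]
    set E := Real.exp (-θ / 2)
    set p := |v (t0 - E * E) (x0 + E * y)|
    set q := |vx (t0 - E * E) (x0 + E * y)|
    have hE : 0 < E := Real.exp_pos _
    have k3 : E * p ≤ p := mul_le_of_le_one_left (abs_nonneg _) (e2 θ h)
    have k4 : 0 ≤ C * E := mul_nonneg S.hC hE.le
    calc E * E * (C * (p + q)) = C * E * (E * p + E * q) := by ring
      _ ≤ _ := mul_le_mul_of_nonneg_left (by linarith) k4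
  · intro θ h y
    have k1 := S.lipt t0 (t0 - Real.exp (-θ)) (x0 + Real.exp (-θ / 2) * y)
    have k2 := S.quad h0 h1 (x0 + Real.exp (-θ / 2) * y)
    rw [sub_sub_cancel_left, abs_neg, abs_of_pos (Real.exp_pos _)] at k1
    have k3 : (x0 + Real.exp (-θ / 2) * y - x0) ^ 2 = Real.exp (-θ) * y ^ 2 := by
      rw [hsq θ]; ring
    rw [k3] at k2
    have k4 := abs_le.1 k1
    have k5 := abs_le.1 k2
    have k6 : 0 ≤ B * Real.exp (-θ) := by positivity
    have k7 := mul_nonneg k6 (sq_nonneg y)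
    rw [abs_le]
    constructor <;> nlinarith
  · intro θ h
    obtain ⟨x, hx⟩ := hnz (t0 - Real.exp (-θ))
    refine ⟨(x - x0) / Real.exp (-θ / 2), ?_⟩
    rw [mul_div_cancel₀ _ (Real.exp_pos _).ne', add_sub_cancel]
    exact hx

lemma no_multiple (S : ZSol v vt vx vxx B C) (hconst : ∀ t s, zeroNumber (v t) = zeroNumber (v s))
    (hnz : ∀ t, ∃ x, v t x ≠ 0) (t0 x0 : ℝ) (h0 : v t0 x0 = 0) : vx t0 x0 ≠ 0 := by
  intro h1
  obtain ⟨K, hK, H⟩ := (S.toOU h0 h1 hnz).main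
  refine triple_contra S hconst h0 fun r hr => ?_
  have l1 : Filter.Tendsto (fun θ : ℝ => Real.exp (-θ)) Filter.atTop (nhds 0) :=
    Real.tendsto_exp_neg_atTop_nhds_zero
  have l2 : Filter.Tendsto (fun θ : ℝ => Real.exp (-θ / 2) * K) Filter.atTop (nhds 0) := by
    have := (l1.comp (Filter.tendsto_id.atTop_div_const (two_pos (α := ℝ)))).mul_const K
    rw [zero_mul] at this
    refine this.congr fun θ => ?_
    simp only [Function.comp, id]; rw [neg_div]
  obtain ⟨Θ, hΘ⟩ := Filter.eventually_atTop.1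
    ((l1.eventually_lt_const hr).and (l2.eventually_lt_const hr))
  obtain ⟨θ, hθ, a, b, c, q1, q2, q3, q4, q5, q6⟩ := H Θ
  obtain ⟨m1, m2⟩ := hΘ θ hθ
  have hE := Real.exp_pos (-θ / 2)
  refine ⟨Real.exp (-θ), Real.exp_pos _, m1, x0 + Real.exp (-θ / 2) * a, x0 + Real.exp (-θ / 2) * b,
    x0 + Real.exp (-θ / 2) * c, ?_, ?_, ?_, ?_, q5, q6⟩
  · nlinarith
  · nlinarith
  · nlinarith
  · nlinarith

end ZSol

end

section

open MeasureTheory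


lemma biper_bound {g : ℝ → ℝ → ℝ} (hc : Continuous (fun q : ℝ × ℝ => g q.1 q.2)) {p : ℝ}
    (hp : 0 < p) (h1 : ∀ t x, g (t + p) x = g t x) (h2 : ∀ t x, g t (x + 1) = g t x) :
    ∃ B, ∀ t x, |g t x| ≤ B := by
  obtain ⟨B, hB⟩ := ((isCompact_Icc (a := (0:ℝ)) (b := p)).prod
    (isCompact_Icc (a := (0:ℝ)) (b := 1))).exists_bound_of_continuousOn hc.continuousOn
  refine ⟨B, fun t x => ?_⟩
  obtain ⟨s, hs, hs'⟩ := Function.Periodic.exists_mem_Ico₀ (f := fun t => g t x)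
    (fun t => h1 t x) hp t
  obtain ⟨y, hy, hy'⟩ := Function.Periodic.exists_mem_Ico₀ (f := fun x => g s x)
    (fun x => h2 s x) one_pos x
  rw [hs', hy']
  exact hB (s, y) ⟨Ico_subset_Icc_self hs, Ico_subset_Icc_self hy⟩

lemma f_lip {f : ℝ → ℝ → ℝ → ℝ} (hf : ContDiff ℝ 2 (fun q : ℝ × ℝ × ℝ => f q.1 q.2.1 q.2.2))
    (hp : ∀ x u q : ℝ, f (x + 1) u q = f x u q) (R : ℝ) :
    ∃ L, 0 ≤ L ∧ ∀ x u u' q q' : ℝ, |u| ≤ R → |u'| ≤ R → |q| ≤ R → |q'| ≤ R →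
      |f x u q - f x u' q'| ≤ L * (|u - u'| + |q - q'|) := by
  set F := (fun q : ℝ × ℝ × ℝ => f q.1 q.2.1 q.2.2)
  have hc : Continuous (fderiv ℝ F) := hf.continuous_fderiv (by norm_num)
  have hd : Differentiable ℝ F := hf.differentiable (by norm_num)
  set K : Set (ℝ × ℝ × ℝ) := Icc 0 1 ×ˢ (Icc (-R) R ×ˢ Icc (-R) R)
  have hK : IsCompact K := isCompact_Icc.prod (isCompact_Icc.prod isCompact_Icc)
  have hKc : Convex ℝ K := (convex_Icc _ _).prod ((convex_Icc _ _).prod (convex_Icc _ _))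
  obtain ⟨L, hL⟩ := hK.exists_bound_of_continuousOn hc.continuousOn
  refine ⟨max L 0, le_max_right _ _, fun x u u' q q' a1 a2 a3 a4 => ?_⟩
  obtain ⟨y, hy, hy'⟩ := Function.Periodic.exists_mem_Ico₀ (f := fun x => f x u q - f x u' q')
    (fun x => by simp only [hp]) one_pos x
  rw [hy']
  have hy2 := Ico_subset_Icc_self hy
  have h := Convex.norm_image_sub_le_of_norm_fderiv_le (𝕜 := ℝ) (f := F) (s := K) (C := max L 0)
    (fun z _ => hd z) (fun z hz => (hL z hz).trans (le_max_left _ _)) hKc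
    (x := (y, u', q')) (y := (y, u, q)) ⟨hy2, abs_le.1 a2, abs_le.1 a4⟩ ⟨hy2, abs_le.1 a1, abs_le.1 a3⟩
  refine (show |f y u q - f y u' q'| ≤ _ from h).trans
    (mul_le_mul_of_nonneg_left ?_ (le_max_right _ _))
  have k1 := abs_nonneg (u - u')
  have k2 := abs_nonneg (q - q')
  simp only [Prod.mk_sub_mk, Prod.norm_mk, sub_self, norm_zero, Real.norm_eq_abs]
  refine max_le (by linarith) (max_le (by linarith) (by linarith))

lemma per_bounds {f : ℝ → ℝ → ℝ → ℝ} {γ : ℝ → ℝ → ℝ} (h : IsClassicalSolution f γ) {p : ℝ}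
    (hp : 0 < p) (hper : ∀ t, γ (t + p) = γ t) : ∃ B, ∀ t x, |γ t x| ≤ B ∧
      |deriv (fun s => γ s x) t| ≤ B ∧ |deriv (γ t) x| ≤ B ∧ |deriv (deriv (γ t)) x| ≤ B := by
  obtain ⟨h1, h2, h3, h4, h5, h6, h7, h8, h9⟩ := h
  have d1 : ∀ t x, deriv (γ t) (x + 1) = deriv (γ t) x := fun t x => by
    rw [← deriv_comp_add_const]
    congr 1
    funext y
    exact h1 t y
  have d2 : ∀ t x, deriv (deriv (γ t)) (x + 1) = deriv (deriv (γ t)) x := fun t x => by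
    rw [← deriv_comp_add_const]
    congr 1
    funext y
    exact d1 t y
  obtain ⟨B1, b1⟩ := biper_bound h2 hp (fun t x => by rw [hper]) (fun t x => h1 t x)
  obtain ⟨B2, b2⟩ := biper_bound (g := fun t x => deriv (fun s => γ s x) t) h6 hp
    (fun t x => by
      rw [← deriv_comp_add_const (f := fun s => γ s x)]
      simp only [hper])
    (fun t x => by
      congr 1
      funext s
      exact h1 s x)
  obtain ⟨B3, b3⟩ := biper_bound (g := fun t x => deriv (γ t) x) h7 hp
    (fun t x => by simp only [hper]) d1
  obtain ⟨B4, b4⟩ := biper_bound (g := fun t x => deriv (deriv (γ t)) x) h8 hp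
    (fun t x => by simp only [hper]) d2
  exact ⟨max (max B1 B2) (max B3 B4), fun t x =>
    ⟨(b1 t x).trans (by simp), (b2 t x).trans (by simp), (b3 t x).trans (by simp),
      (b4 t x).trans (by simp)⟩⟩

lemma diff_zsol {f : ℝ → ℝ → ℝ → ℝ} (hf : ContDiff ℝ 2 (fun q : ℝ × ℝ × ℝ => f q.1 q.2.1 q.2.2))
    (hp : ∀ x u q : ℝ, f (x + 1) u q = f x u q) {γ₁ γ₂ : ℝ → ℝ → ℝ}
    (s1 : IsClassicalSolution f γ₁) (s2 : IsClassicalSolution f γ₂) {B : ℝ}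
    (b1 : ∀ t x, |γ₁ t x| ≤ B ∧ |deriv (fun s => γ₁ s x) t| ≤ B ∧ |deriv (γ₁ t) x| ≤ B ∧
      |deriv (deriv (γ₁ t)) x| ≤ B)
    (b2 : ∀ t x, |γ₂ t x| ≤ B ∧ |deriv (fun s => γ₂ s x) t| ≤ B ∧ |deriv (γ₂ t) x| ≤ B ∧
      |deriv (deriv (γ₂ t)) x| ≤ B) :
    ∃ C, ZSol (fun t x => γ₁ t x - γ₂ t x)
      (fun t x => deriv (fun s => γ₁ s x) t - deriv (fun s => γ₂ s x) t)
      (fun t x => deriv (γ₁ t) x - deriv (γ₂ t) x)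
      (fun t x => deriv (deriv (γ₁ t)) x - deriv (deriv (γ₂ t)) x) (B + B) C := by
  obtain ⟨L, hL, hlip⟩ := f_lip hf hp B
  obtain ⟨h1, h2, h3, h4, h5, h6, h7, h8, h9⟩ := s1
  obtain ⟨g1, g2, g3, g4, g5, g6, g7, g8, g9⟩ := s2
  have sub : ∀ {a b : ℝ}, |a| ≤ B → |b| ≤ B → |a - b| ≤ B + B := fun ha hb =>
    (abs_sub _ _).trans (add_le_add ha hb)
  refine ⟨L, fun t x => ?_, fun t x => ?_, fun t x => ?_, fun t x => ?_, h2.sub g2, h6.sub g6,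
    h7.sub g7, h8.sub g8, fun t x => sub (b1 t x).1 (b2 t x).1,
    fun t x => sub (b1 t x).2.1 (b2 t x).2.1, fun t x => sub (b1 t x).2.2.1 (b2 t x).2.2.1,
    fun t x => sub (b1 t x).2.2.2 (b2 t x).2.2.2, hL, fun t x => ?_⟩
  · exact (h4 t x).hasDerivAt.sub (g4 t x).hasDerivAt
  · exact (h5 t x).hasDerivAt.sub (g5 t x).hasDerivAt
  · exact (h3 t x).hasDerivAt.sub (g3 t x).hasDerivAt
  · have e1 : γ₁ t (x + 1) = γ₁ t x := h1 t x
    have e2 : γ₂ t (x + 1) = γ₂ t x := g1 t x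
    simp only [e1, e2]
  · have := hlip x (γ₁ t x) (γ₂ t x) (deriv (γ₁ t) x) (deriv (γ₂ t) x) (b1 t x).1 (b2 t x).1
      (b1 t x).2.2.1 (b2 t x).2.2.1
    rw [h9, g9]
    refine le_trans (le_of_eq ?_) this
    congr 1
    ring

lemma recur {γ₁ γ₂ : ℝ → ℝ → ℝ} {p₁ p₂ B : ℝ} (hp₁ : 0 < p₁) (hp₂ : 0 < p₂)
    (h₁ : ∀ t, γ₁ (t + p₁) = γ₁ t) (h₂ : ∀ t, γ₂ (t + p₂) = γ₂ t)
    (hlip : ∀ t s x, |γ₂ s x - γ₂ t x| ≤ B * |s - t|) (hB : 0 ≤ B) (t T ε : ℝ) (hε : 0 < ε) :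
    ∃ t' ≥ T, ∀ x, |(γ₁ t' x - γ₂ t' x) - (γ₁ t x - γ₂ t x)| ≤ ε := by
  obtain ⟨M, hM⟩ := exists_nat_ge ((T - t) / p₁)
  obtain ⟨N, hN⟩ := exists_nat_ge (B * p₂ / ε)
  obtain ⟨k, hk, -, hk'⟩ := Real.exists_nat_abs_mul_sub_round_le (M * p₁ / p₂) (Nat.succ_pos N)
  set m := round ((k:ℝ) * (M * p₁ / p₂))
  have hk1 : (1:ℝ) ≤ k := by exact_mod_cast hk
  have hM0 : (0:ℝ) ≤ M := Nat.cast_nonneg M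
  rw [div_le_iff₀ hp₁] at hM
  rw [div_le_iff₀ hε] at hN
  have hN0 : (0:ℝ) ≤ N := Nat.cast_nonneg N
  have q1 : ∀ s, γ₁ (s + ((k * M : ℕ) : ℝ) * p₁) = γ₁ s := fun s =>
    (Function.Periodic.nat_mul (f := γ₁) h₁ (k * M)) s
  have q2 : ∀ s, γ₂ (s - (m : ℝ) * p₂) = γ₂ s := fun s =>
    (Function.Periodic.int_mul (f := γ₂) h₂ m).sub_eq s
  refine ⟨t + ((k * M : ℕ) : ℝ) * p₁, ?_, fun x => ?_⟩
  · push_cast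
    nlinarith [mul_nonneg hM0 hp₁.le]
  · rw [q1, ← q2]
    have h := hlip t (t + ((k * M : ℕ) : ℝ) * p₁ - (m : ℝ) * p₂) x
    have e : t + ((k * M : ℕ) : ℝ) * p₁ - (m : ℝ) * p₂ - t = (k * (M * p₁ / p₂) - m) * p₂ := by
      push_cast; field_simp; ring
    rw [e, abs_mul, abs_of_pos hp₂] at h
    have e2 : ∀ a b c : ℝ, |(a - b) - (a - c)| = |b - c| := fun a b c => by
      rw [abs_sub_comm b c]; congr 1; ring
    rw [e2]
    refine h.trans ?_
    have h3 := mul_le_mul_of_nonneg_left (mul_le_mul_of_nonneg_right hk' hp₂.le) hB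
    refine h3.trans ?_
    push_cast
    rw [one_div, ← div_eq_inv_mul, ← mul_div_assoc, div_le_iff₀ (by positivity)]
    nlinarith

lemma zn_const {v vt vx vxx : ℝ → ℝ → ℝ} {B C : ℝ} (S : ZSol v vt vx vxx B C)
    (hrec : ∀ t T ε : ℝ, 0 < ε → ∃ t' ≥ T, ∀ x, |v t' x - v t x| ≤ ε) (t s : ℝ) :
    zeroNumber (v t) = zeroNumber (v s) := by
  have key : ∀ t s, zeroNumber (v t) ≤ zeroNumber (v s) := by
    intro t s
    refine zn_bound fun n x hx => ?_
    obtain ⟨σ, h1, h2, h3⟩ := zcyc_sign hx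
    obtain ⟨i0, hi0⟩ := Finite.exists_min (fun i => σ i * v t (x i))
    obtain ⟨t', ht', hv⟩ := hrec t s (σ i0 * v t (x i0) / 2) (half_pos (h3 i0))
    have hz : ZCyc (v t') n x := zcyc_of_sign hx.1 h2 fun i => by
      have a1 : |σ i * (v t' (x i) - v t (x i))| ≤ σ i0 * v t (x i0) / 2 := by
        rw [abs_mul, h1, one_mul]; exact hv _
      have a2 := (abs_le.1 a1).1
      have a3 := hi0 i
      have a4 := h3 i0
      nlinarith
    exact (zn_le hz).trans (zn_mono S ht')
  exact le_antisymm (key t s) (key s t)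

theorem core {f : ℝ → ℝ → ℝ → ℝ} (hf : ContDiff ℝ 2 (fun q : ℝ × ℝ × ℝ => f q.1 q.2.1 q.2.2))
    (hp : ∀ x u q : ℝ, f (x + 1) u q = f x u q) {γ₁ γ₂ : ℝ → ℝ → ℝ}
    (s1 : IsClassicalSolution f γ₁) (s2 : IsClassicalSolution f γ₂) {p₁ p₂ : ℝ}
    (hp₁ : 0 < p₁) (hp₂ : 0 < p₂)
    (h₁ : ∀ t, γ₁ (t + p₁) = γ₁ t) (h₂ : ∀ t, γ₂ (t + p₂) = γ₂ t) (hne : ∀ t, γ₁ t ≠ γ₂ t) :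
    (∀ t s : ℝ,
        zeroNumber (fun x => γ₁ t x - γ₂ t x) = zeroNumber (fun x => γ₁ s x - γ₂ s x))
      ∧ ∀ t : ℝ, ¬ HasMultipleZero (fun x => γ₁ t x - γ₂ t x) := by
  obtain ⟨B1, b1⟩ := per_bounds s1 hp₁ h₁
  obtain ⟨B2, b2⟩ := per_bounds s2 hp₂ h₂
  have m1 := le_max_left B1 B2
  have m2 := le_max_right B1 B2
  obtain ⟨C, S⟩ := diff_zsol hf hp s1 s2 (B := max B1 B2)
    (fun t x => ⟨(b1 t x).1.trans m1, (b1 t x).2.1.trans m1, (b1 t x).2.2.1.trans m1,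
      (b1 t x).2.2.2.trans m1⟩)
    (fun t x => ⟨(b2 t x).1.trans m2, (b2 t x).2.1.trans m2, (b2 t x).2.2.1.trans m2,
      (b2 t x).2.2.2.trans m2⟩)
  have hconst := zn_const S (recur (B := B2) hp₁ hp₂ h₁ h₂ (fun t s x => by
      have := Convex.norm_image_sub_le_of_norm_hasDerivWithin_le (f := fun s => γ₂ s x)
        (fun s _ => (s2.2.2.1 s x).hasDerivAt.hasDerivWithinAt) (fun s _ => (b2 s x).2.1) convex_univ
        (mem_univ t) (mem_univ s)
      simpa using this) ((abs_nonneg _).trans (b2 0 0).1))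
  refine ⟨hconst, fun t => ?_⟩
  rintro ⟨x, hx, hx'⟩
  rw [(S.hx t x).deriv] at hx'
  refine S.no_multiple hconst (fun t => ?_) t x hx hx'
  by_contra hcon
  push Not at hcon
  exact hne t (funext fun x => sub_eq_zero.1 (hcon x))

lemma eq_classical {f : ℝ → ℝ → ℝ → ℝ} {e : ℝ → ℝ} (h : IsEquilibrium f e) :
    IsClassicalSolution f (fun _ => e) := by
  obtain ⟨h1, h2, h3⟩ := h
  have hd : Differentiable ℝ e := h2.differentiable (by norm_num)
  have h2' : ContDiff ℝ 1 (deriv e) := by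
    have : ContDiff ℝ (1 + 1) e := by simpa [one_add_one_eq_two] using h2
    exact (contDiff_succ_iff_deriv.1 this).2.2
  have hd' : Differentiable ℝ (deriv e) := h2'.differentiable (by norm_num)
  have hc : Continuous (deriv (deriv e)) := h2'.continuous_deriv (by norm_num)
  refine ⟨fun _ => h1, hd.continuous.comp continuous_snd, fun t x => differentiableAt_const _,
    fun _ => hd, fun _ => hd', ?_, h2'.continuous.comp continuous_snd, hc.comp continuous_snd, ?_⟩
  · simp only [deriv_const]; exact continuous_const
  · intro t x
    rw [h3, deriv_const]

end

/-- **Constancy of the zero number and absence of multiple zeros for differences of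
critical elements.**  If `e` is an equilibrium and `γ` a classical periodic solution
of minimal period `p > 0` with `γ(·,t) ≠ e` for every `t`, then `z(e - γ(·,t))` is
independent of `t` and `x ↦ e(x) - γ(x,t)` never has a multiple zero.  The same holds
for the difference of two distinct equilibria and for the difference of two classical
periodic solutions `γ₁`, `γ₂` with `γ₁(·,t) ≠ γ₂(·,t)` for all `t`. -/
theorem zero_number_constant_no_multiple_zero
    (f : ℝ → ℝ → ℝ → ℝ)
    (hf_reg : ContDiff ℝ 2 (fun q : ℝ × ℝ × ℝ => f q.1 q.2.1 q.2.2))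
    (hf_per : ∀ (x u q : ℝ), f (x + 1) u q = f x u q)
    -- an equilibrium and a periodic solution avoiding it
    (e : ℝ → ℝ) (he : IsEquilibrium f e)
    (γ : ℝ → ℝ → ℝ) (p : ℝ) (hγ : IsPeriodicSolution f γ p)
    (hne : ∀ t, γ t ≠ e)
    -- two distinct equilibria
    (e₁ e₂ : ℝ → ℝ) (he₁ : IsEquilibrium f e₁) (he₂ : IsEquilibrium f e₂)
    (he₁₂ : e₁ ≠ e₂)
    -- two classical periodic solutions with disjoint time-slices
    (γ₁ γ₂ : ℝ → ℝ → ℝ) (p₁ p₂ : ℝ)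
    (hγ₁ : IsPeriodicSolution f γ₁ p₁) (hγ₂ : IsPeriodicSolution f γ₂ p₂)
    (hγ₁₂ : ∀ t, γ₁ t ≠ γ₂ t) :
    ((∀ t s : ℝ,
        zeroNumber (fun x => e x - γ t x) = zeroNumber (fun x => e x - γ s x))
      ∧ ∀ t : ℝ, ¬ HasMultipleZero (fun x => e x - γ t x))
    ∧ (¬ HasMultipleZero (fun x => e₁ x - e₂ x))
    ∧ ((∀ t s : ℝ,
        zeroNumber (fun x => γ₁ t x - γ₂ t x) = zeroNumber (fun x => γ₁ s x - γ₂ s x))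
      ∧ ∀ t : ℝ, ¬ HasMultipleZero (fun x => γ₁ t x - γ₂ t x)) := by
  refine ⟨?_, ?_, ?_⟩
  · exact core hf_reg hf_per (eq_classical he) hγ.1 one_pos hγ.2.1 (fun _ => rfl) hγ.2.2.1
      (fun t h => hne t h.symm)
  · exact (core hf_reg hf_per (eq_classical he₁) (eq_classical he₂) one_pos one_pos
      (fun _ => rfl) (fun _ => rfl) (fun _ => he₁₂)).2 0
  · exact core hf_reg hf_per hγ₁.1 hγ₂.1 hγ₁.2.1 hγ₂.2.1 hγ₁.2.2.1 hγ₂.2.2.1 hγ₁₂
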